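/- For every k, w ∈ ℕ with k ≥ 7, the set obs_{≤i}(C_{w,k}) contains at least binom(3^{k-7} + w + 1, w + 1) pairwise non-isomorphic graphs. -/

import Mathlib

/-- A finite undirected multigraph without loops. -/
structure Multigraph where
  V : Type
  E : Type
  finV : Finite V
  finE : Finite E
  ends : E → V × V
  loopless : ∀ e, (ends e).1 ≠ (ends e).2

attribute [instance] Multigraph.finV Multigraph.finE

namespace Multigraph

/-- `δ_G(S)`: the number of edges of `G` with exactly one endpoint in `S`. -/
noncomputable def delta (G : Multigraph) (S : Set G.V) : ℕ :=
  {e : G.E | ¬ ((G.ends e).1 ∈ S ↔ (G.ends e).2 ∈ S)}.ncard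

/-- The width `cw_σ(G)` of an ordering, represented as an injective ranking `ρ : V → ℕ`. -/
noncomputable def cwOrd (G : Multigraph) (ρ : G.V → ℕ) : ℕ :=
  sSup {w | ∃ v : G.V, w = G.delta {u | ρ u ≤ ρ v}}

/-- The cutwidth of a multigraph. -/
noncomputable def cutwidth (G : Multigraph) : ℕ :=
  sInf {w | ∃ ρ : G.V → ℕ, Function.Injective ρ ∧ G.cwOrd ρ = w}

/-- Walks in a multigraph. -/
inductive Walk (G : Multigraph) : G.V → G.V → Type
  | nil (v : G.V) : Walk G v v
  | cons {u v w : G.V} (e : G.E)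
      (h : G.ends e = (u, v) ∨ G.ends e = (v, u)) (p : Walk G v w) : Walk G u w

namespace Walk

def edges {G : Multigraph} : ∀ {u v : G.V}, G.Walk u v → List G.E
  | _, _, .nil _ => []
  | _, _, .cons e _ p => e :: p.edges

def support {G : Multigraph} : ∀ {u v : G.V}, G.Walk u v → List G.V
  | _, _, .nil v => [v]
  | u, _, .cons _ _ p => u :: p.support

end Walk

def Connected (G : Multigraph) : Prop := ∀ u v : G.V, Nonempty (G.Walk u v)

/-- An immersion model of `H` in `G`. -/
structure ImmersionModel (H G : Multigraph) where
  vmap : H.V → G.V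
  inj : Function.Injective vmap
  emap : (e : H.E) → G.Walk (vmap (H.ends e).1) (vmap (H.ends e).2)
  isPath : ∀ e, ((emap e).support).Nodup
  edgeDisj : ∀ e e', e ≠ e' → ∀ f, f ∈ (emap e).edges → f ∉ (emap e').edges

/-- `H ≤_i G`. -/
def Immersion (H G : Multigraph) : Prop := Nonempty (ImmersionModel H G)

/-- A strong immersion model: no internal vertex of a path is a branch vertex. -/
structure StrongImmersionModel (H G : Multigraph) extends ImmersionModel H G where
  strong : ∀ e, ∀ x, x ∈ (emap e).support →
    x ≠ vmap (H.ends e).1 → x ≠ vmap (H.ends e).2 → x ∉ Set.range vmap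

/-- `H ≤_si G`. -/
def StrongImmersion (H G : Multigraph) : Prop := Nonempty (StrongImmersionModel H G)

/-- Isomorphism of multigraphs. -/
structure Iso (G H : Multigraph) where
  fv : G.V ≃ H.V
  fe : G.E ≃ H.E
  pres : ∀ e, H.ends (fe e) = (fv (G.ends e).1, fv (G.ends e).2)
           ∨ H.ends (fe e) = (fv (G.ends e).2, fv (G.ends e).1)

def Isomorphic (G H : Multigraph) : Prop := Nonempty (Iso G H)

/-- The minimal obstruction set of a class `C` with respect to a partial order `le`. -/
def obstructions (le : Multigraph → Multigraph → Prop) (C : Set Multigraph) :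
    Set Multigraph :=
  {G | G ∉ C ∧ ∀ G', le G' G → ¬ G'.Isomorphic G → G' ∈ C}

/-- `C_k`: the class of multigraphs of cutwidth at most `k`. -/
def cutwidthClass (k : ℕ) : Set Multigraph := {G | G.cutwidth ≤ k}

/-- The degree of a vertex (each parallel edge counts once at each endpoint). -/
noncomputable def degree (G : Multigraph) (v : G.V) : ℕ :=
  {e : G.E | (G.ends e).1 = v ∨ (G.ends e).2 = v}.ncard

/-- The number of `A`-blocks of an ordering `ρ`: the number of maximal runs of
consecutive (in `ρ`) vertices belonging to `A`, counted via block-starting vertices. -/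
noncomputable def blockCount (G : Multigraph) (ρ : G.V → ℕ) (A : Set G.V) : ℕ :=
  {v : G.V | v ∈ A ∧ ∀ u : G.V, ρ u < ρ v →
      ∃ w : G.V, w ∉ A ∧ ρ u ≤ ρ w ∧ ρ w < ρ v}.ncard

/-- The extension `G*` of a `k`-boundaried graph `(G, x)`. -/
def extension (G : Multigraph) {k : ℕ} (x : Fin k → G.V) : Multigraph where
  V := G.V ⊕ Fin k
  E := G.E ⊕ Fin k
  finV := inferInstance
  finE := inferInstance
  ends := Sum.elim (fun e => (Sum.inl (G.ends e).1, Sum.inl (G.ends e).2))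
                   (fun i => (Sum.inl (x i), Sum.inr i))
  loopless := by
    rintro (e | i)
    · simpa using G.loopless e
    · simp

/-- The join `𝐀 ⊕ 𝐁` of two `k`-boundaried graphs. -/
def join {k : ℕ} (A B : Multigraph) (x : Fin k → A.V) (y : Fin k → B.V) : Multigraph where
  V := A.V ⊕ B.V
  E := (A.E ⊕ B.E) ⊕ Fin k
  finV := inferInstance
  finE := inferInstance
  ends := Sum.elim
    (Sum.elim (fun e => (Sum.inl (A.ends e).1, Sum.inl (A.ends e).2))
              (fun e => (Sum.inr (B.ends e).1, Sum.inr (B.ends e).2)))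
    (fun i => (Sum.inl (x i), Sum.inr (y i)))
  loopless := by
    rintro ((e | e) | i)
    · simpa using A.loopless e
    · simpa using B.loopless e
    · simp

/-- An `ℓ`-bucketing of an ordering `ρ` (buckets indexed 1,…,ℓ). -/
def IsBucketing (G : Multigraph) (ρ : G.V → ℕ) (ℓ : ℕ) (T : G.V → ℕ) : Prop :=
  (∀ v, 1 ≤ T v ∧ T v ≤ ℓ) ∧ ∀ u v : G.V, ρ u ≤ ρ v → T u ≤ T v

/-- `width(G,σ,T,i)`: the maximum size of a cut in `cuts(G,σ,T,i)`; these cuts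
are described by their left side `S`, which contains all buckets before `i`,
a `σ`-downward-closed part of bucket `i`, and nothing else. -/
noncomputable def bucketWidth (G : Multigraph) (ρ : G.V → ℕ) (T : G.V → ℕ) (i : ℕ) : ℕ :=
  sSup {w | ∃ S : Set G.V,
    (∀ v, T v < i → v ∈ S) ∧ (∀ v ∈ S, T v ≤ i) ∧
    (∀ u v : G.V, T u = i → T v = i → ρ u ≤ ρ v → v ∈ S → u ∈ S) ∧
    w = G.delta S}

/-- A `(k,ℓ)`-bucket interface. -/
structure BucketInterface (k ℓ : ℕ) where
  b : Fin k → ℕ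
  b' : Fin k → ℕ
  mu : ℕ → ℕ
  mu' : ℕ → ℕ
  b_mem : ∀ i, b i ∈ Set.Icc 1 ℓ
  b'_mem : ∀ i, b' i ∈ Set.Icc 1 ℓ
  mu_le : ∀ j, mu j ≤ k
  mu'_le : ∀ j, mu' j ≤ k

/-- A `k`-boundaried graph `(G, x)` conforms with a `(k,ℓ)`-bucket interface. -/
def Conforms {k : ℕ} (G : Multigraph) (x : Fin k → G.V) (ℓ : ℕ)
    (I : BucketInterface k ℓ) : Prop :=
  ∃ ρ : (G.extension x).V → ℕ, Function.Injective ρ ∧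
  ∃ T : (G.extension x).V → ℕ, (G.extension x).IsBucketing ρ ℓ T ∧
    (∀ v : G.V, Odd (T (Sum.inl v))) ∧
    (∀ i : Fin k, Even (T (Sum.inr i))) ∧
    (∀ i : Fin k, T (Sum.inl (x i)) = I.b i) ∧
    (∀ i : Fin k, T (Sum.inr i) = I.b' i) ∧
    (∀ j ∈ Set.Icc 1 ℓ,
      G.bucketWidth (fun v => ρ (Sum.inl v)) (fun v => T (Sum.inl v)) j ≤ I.mu j) ∧
    (∀ j ∈ Set.Icc 1 ℓ, (G.extension x).bucketWidth ρ T j ≤ I.mu' j)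

/-- `m` pairwise edge-disjoint paths between the sets `X` and `Y`. -/
def ConnectorBetween (G : Multigraph) (X Y : Set G.V) (m : ℕ) : Prop :=
  ∃ (s t : Fin m → G.V) (P : (i : Fin m) → G.Walk (s i) (t i)),
    (∀ i, s i ∈ X) ∧ (∀ i, t i ∈ Y) ∧ (∀ i, (P i).support.Nodup) ∧
    ∀ i j, i ≠ j → ∀ f, f ∈ (P i).edges → f ∉ (P j).edges

/-- A linked ordering. -/
def Linked (G : Multigraph) (ρ : G.V → ℕ) : Prop :=
  ∀ u u' : G.V, ρ u ≤ ρ u' →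
    G.ConnectorBetween {z | ρ z ≤ ρ u} {z | ¬ ρ z ≤ ρ u'}
      (sInf {w | ∃ v : G.V, ρ u ≤ ρ v ∧ ρ v ≤ ρ u' ∧ w = G.delta {z | ρ z ≤ ρ v}})

/-- The multigraph obtained by deleting a set of edges. -/
def deleteEdges (G : Multigraph) (F : Set G.E) : Multigraph where
  V := G.V
  E := {e : G.E // e ∉ F}
  finV := G.finV
  finE := inferInstance
  ends e := G.ends e.1
  loopless e := G.loopless e.1

/-- `dcw_k(G)`: minimum number of edges to delete to reach cutwidth at most `k`. -/
noncomputable def dcw (k : ℕ) (G : Multigraph) : ℕ :=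
  sInf {w | ∃ F : Set G.E, (G.deleteEdges F).cutwidth ≤ k ∧ F.ncard = w}

/-- The class `C_{w,k}`. -/
def dcwClass (w k : ℕ) : Set Multigraph := {G | dcw k G ≤ w}

/-- Induced subgraph `G[X]`. -/
def induce (G : Multigraph) (X : Set G.V) : Multigraph where
  V := X
  E := {e : G.E // (G.ends e).1 ∈ X ∧ (G.ends e).2 ∈ X}
  finV := inferInstance
  finE := inferInstance
  ends e := (⟨(G.ends e.1).1, e.2.1⟩, ⟨(G.ends e.1).2, e.2.2⟩)
  loopless := by
    intro e h
    exact G.loopless e.1 (Subtype.ext_iff.mp h)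

/-- A graph is `ℋ`-immersion-free if it contains no member of `ℋ` as an immersion. -/
def ImmersionFree (H : Set Multigraph) (G : Multigraph) : Prop :=
  ∀ X ∈ H, ¬ Immersion X G

/-- `aic_ℋ(G)`: minimum number of edge deletions to reach an `ℋ`-immersion-free graph. -/
noncomputable def aic (H : Set Multigraph) (G : Multigraph) : ℕ :=
  sInf {w | ∃ F : Set G.E, ImmersionFree H (G.deleteEdges F) ∧ F.ncard = w}

/-- The class `C_{w,ℋ}`. -/
def aicClass (w : ℕ) (H : Set Multigraph) : Set Multigraph := {G | aic H G ≤ w}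

/-- `ℋ` is a `≤_i`-antichain. -/
def IsAntichainImm (H : Set Multigraph) : Prop :=
  ∀ G₁ ∈ H, ∀ G₂ ∈ H, Immersion G₁ G₂ → Isomorphic G₁ G₂

/-- Disjoint union of two multigraphs. -/
def disjUnion (G H : Multigraph) : Multigraph where
  V := G.V ⊕ H.V
  E := G.E ⊕ H.E
  finV := inferInstance
  finE := inferInstance
  ends := Sum.elim (fun e => (Sum.inl (G.ends e).1, Sum.inl (G.ends e).2))
                   (fun e => (Sum.inr (H.ends e).1, Sum.inr (H.ends e).2))
  loopless := by
    rintro (e | e)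
    · simpa using G.loopless e
    · simpa using H.loopless e

/-- Disjoint union of a finite family of multigraphs. -/
def sigmaUnion {m : ℕ} (Gs : Fin m → Multigraph) : Multigraph where
  V := Σ i, (Gs i).V
  E := Σ i, (Gs i).E
  finV := inferInstance
  finE := inferInstance
  ends e := (⟨e.1, ((Gs e.1).ends e.2).1⟩, ⟨e.1, ((Gs e.1).ends e.2).2⟩)
  loopless := by
    intro e h
    exact (Gs e.1).loopless e.2 (by simpa using h)

/-- `cw_σ(G,X) = δ_G(X) + cw_{σ_X}(G[X])`. -/
noncomputable def cwRel (G : Multigraph) (ρ : G.V → ℕ) (X : Set G.V) : ℕ :=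
  G.delta X + (G.induce X).cwOrd (fun v => ρ v.val)

/-- Membership in the family of prefixes relevant to `X`-linkedness: the complement
of `X` (the prefix right before `X` starts) and the prefixes ending inside `X`. -/
def IsXPrefix (G : Multigraph) (ρ : G.V → ℕ) (X : Set G.V) (P : Set G.V) : Prop :=
  P = Xᶜ ∨ ∃ v ∈ X, P = {z | ρ z ≤ ρ v}

/-- An `X`-linked ordering. -/
def XLinked (G : Multigraph) (ρ : G.V → ℕ) (X : Set G.V) : Prop :=
  (∀ u v : G.V, u ∉ X → v ∈ X → ρ u < ρ v) ∧
  ∀ P P' : Set G.V, G.IsXPrefix ρ X P → G.IsXPrefix ρ X P' → P ⊆ P' →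
    G.ConnectorBetween P P'ᶜ
      (sInf {w | ∃ Q : Set G.V, G.IsXPrefix ρ X Q ∧ P ⊆ Q ∧ Q ⊆ P' ∧ w = G.delta Q})

end Multigraph

/-!
A disjoint union of `w + 1` connected minimal graphs of cutwidth greater than `k` is an obstruction
for `C_{w,k}`: each component costs one deletion, while any proper immersion saves one. Such
components are built by gluing three graphs of level `k` at vertices of degree one, which gives one
of level `k + 1`. Indeed, in an ordering of width `k + 1`, wherever one of the three has a cut
larger than `k`, the two others lie on the side of the common vertex, which cannot happen for all
three; and after any reduction the three can be swept one after the other. Starting from two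
level-`2` graphs with different numbers of edges, the ternary tree of these gluings realises
exactly `3 ^ (k - 2) + 1` edge counts, and the multiset of edge counts of the components
distinguishes the unions.
-/

namespace Multigraph

/-! ### Sweeps -/

/-- The vertex set `S` can be grown into `T` one vertex at a time through sets satisfying `P`;
a sweep from `∅` to `Set.univ` is a linear ordering all of whose prefixes satisfy `P`. A step may
insert a vertex that is already present, which makes images of sweeps sweeps. -/
def Sweep {V : Type*} (P : Set V → Prop) : Set V → Set V → Prop :=
  Relation.ReflTransGen fun S T => P S ∧ P T ∧ ∃ v, T = insert v S

namespace Sweep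

variable {V W : Type*} {P : Set V → Prop} {Q : Set W → Prop} {S T U : Set V}

lemma refl (P : Set V → Prop) (S : Set V) : Sweep P S S :=
  Relation.ReflTransGen.refl

lemma trans (hST : Sweep P S T) (hTU : Sweep P T U) : Sweep P S U :=
  Relation.ReflTransGen.trans hST hTU

lemma insert_right (hST : Sweep P S T) {v : V} (hT : P T) (hv : P (insert v T)) :
    Sweep P S (insert v T) :=
  Relation.ReflTransGen.tail hST ⟨hT, hv, v, rfl⟩

lemma mono {P' : Set V → Prop} (h : Sweep P S T) (hP : ∀ U, P U → P' U) : Sweep P' S T :=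
  Relation.ReflTransGen.mono (fun _ _ ⟨hS, hT, hv⟩ => ⟨hP _ hS, hP _ hT, hv⟩) _ _ h

lemma subset (h : Sweep P S T) : S ⊆ T := by
  induction h with
  | refl => exact subset_rfl
  | tail _ hstep ih =>
    obtain ⟨-, -, v, rfl⟩ := hstep
    exact ih.trans (Set.subset_insert v _)

lemma between (h : Sweep P S T) : Sweep (fun U => P U ∧ S ⊆ U ∧ U ⊆ T) S T := by
  induction h with
  | refl => exact refl _ _
  | @tail T _ hT hstep ih =>
    obtain ⟨hPT, hPv, v, rfl⟩ := hstep
    have hST : S ⊆ T := Sweep.subset hT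
    have hTv : T ⊆ insert v T := Set.subset_insert v T
    exact (ih.mono fun U hU => ⟨hU.1, hU.2.1, hU.2.2.trans hTv⟩).insert_right
      ⟨hPT, hST, hTv⟩ ⟨hPv, hST.trans hTv, subset_rfl⟩

lemma of_forall_between [Finite V] (hST : S ⊆ T) (h : ∀ U, S ⊆ U → U ⊆ T → P U) :
    Sweep P S T := by
  have key : ∀ R : Set V, S ∪ R ⊆ T → Sweep P S (S ∪ R) := fun R => by
    induction R, Set.toFinite R using Set.Finite.induction_on with
    | empty => exact fun _ => by simpa only [Set.union_empty] using refl P S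
    | @insert v R _ _ ih =>
      intro hR
      rw [Set.union_insert] at hR ⊢
      have hR' : S ∪ R ⊆ T := (Set.subset_insert v _).trans hR
      exact (ih hR').insert_right (h _ Set.subset_union_left hR')
        (h _ (Set.subset_union_left.trans (Set.subset_insert v _)) hR)
  simpa only [Set.union_eq_self_of_subset_left hST] using key T (Set.union_subset hST subset_rfl)

lemma union_image (h : Sweep P S T) (f : V → W) (C : Set W) (hQ : ∀ U, P U → Q (C ∪ f '' U)) :
    Sweep Q (C ∪ f '' S) (C ∪ f '' T) := by
  induction h with
  | refl => exact refl _ _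
  | tail _ hstep ih =>
    obtain ⟨hT, hTv, v, rfl⟩ := hstep
    have hins := hQ _ hTv
    rw [Set.image_insert_eq, Set.union_insert] at hins ⊢
    exact ih.insert_right (hQ _ hT) hins

lemma preimage (h : Sweep P S T) {f : W → V} (hf : Function.Injective f)
    (hQ : ∀ U, P U → Q (f ⁻¹' U)) : Sweep Q (f ⁻¹' S) (f ⁻¹' T) := by
  induction h with
  | refl => exact refl _ _
  | @tail T _ _ hstep ih =>
    obtain ⟨hT, hTv, v, rfl⟩ := hstep
    have hPv := hQ _ hTv
    by_cases hv : ∃ w, f w = v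
    · obtain ⟨w, rfl⟩ := hv
      have hins : f ⁻¹' insert (f w) T = insert w (f ⁻¹' T) := by
        ext u; simp only [Set.mem_preimage, Set.mem_insert_iff, hf.eq_iff]
      rw [hins] at hPv ⊢
      exact ih.insert_right (hQ _ hT) hPv
    · have hins : f ⁻¹' insert v T = f ⁻¹' T := by
        ext u
        simp only [Set.mem_preimage, Set.mem_insert_iff, or_iff_right (fun h => hv ⟨u, h⟩)]
      rwa [hins]

lemma inter (h : Sweep P S T) (C : Set V) {P' : Set V → Prop} (hP : ∀ U, P U → P' (U ∩ C)) :
    Sweep P' (S ∩ C) (T ∩ C) := by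
  have hpre := h.preimage (Subtype.val_injective (p := (· ∈ C)))
    (Q := fun U => P' (Subtype.val '' U)) fun U hU => by
      rw [Subtype.image_preimage_coe, Set.inter_comm]; exact hP U hU
  have himage := hpre.union_image Subtype.val ∅ (Q := P') fun U hU => by
    rwa [Set.empty_union]
  simpa only [Set.empty_union, Subtype.image_preimage_coe, Set.inter_comm C] using himage

lemma compl (h : Sweep P S T) : Sweep (fun U => P Uᶜ) Tᶜ Sᶜ := by
  induction h with
  | refl => exact refl _ _
  | @tail T _ _ hstep ih =>
    obtain ⟨hT, hTv, v, rfl⟩ := hstep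
    by_cases hv : v ∈ T
    · rwa [Set.insert_eq_of_mem hv]
    · have hins : Tᶜ = insert v (insert v T)ᶜ := by
        ext u; by_cases hu : u = v <;> simp [hu, hv]
      refine trans (Relation.ReflTransGen.single ⟨?_, ?_, v, hins⟩) ih <;>
        simpa only [compl_compl]

lemma exists_ordering (h : Sweep P ∅ T) (h0 : P ∅) :
    ∃ (ρ : V → ℕ) (n : ℕ), T = {u | ρ u < n} ∧ Set.InjOn ρ T ∧ ∀ m ≤ n, P {u | ρ u < m} := by
  classical
  induction h with
  | refl => exact ⟨0, 0, by simp, by simp, by simpa using h0⟩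
  | @tail T _ _ hstep ih =>
    obtain ⟨-, hPv, v, rfl⟩ := hstep
    by_cases hv : v ∈ T
    · rwa [Set.insert_eq_of_mem hv]
    obtain ⟨ρ, n, rfl, hinj, hρ⟩ := ih
    let ρ' : V → ℕ := fun u => if ρ u < n then ρ u else if u = v then n else n + 1
    have hlt : ∀ m ≤ n, {u | ρ' u < m} = {u | ρ u < m} := by
      intro m hm; ext u; simp only [ρ', Set.mem_ofPred_eq]; grind
    have hins : insert v {u | ρ u < n} = {u | ρ' u < n + 1} := by
      ext u; simp only [ρ', Set.mem_insert_iff, Set.mem_ofPred_eq]; grind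
    refine ⟨ρ', n + 1, hins, ?_, fun m hm => ?_⟩
    · intro a ha b hb hab
      have hinj' := @hinj a
      simp only [ρ', Set.mem_insert_iff, Set.mem_ofPred_eq] at *
      grind
    · rcases Nat.le_succ_iff.mp hm with hm | rfl
      · exact hlt m hm ▸ hρ m hm
      · exact hins ▸ hPv

end Sweep

/-! ### Edge boundaries and cutwidth -/

section Boundary

variable {G : Multigraph} {S T : Set G.V} {e : G.E} {u v x : G.V}

/-- The edges of `G` with exactly one endpoint in `S`; their number is `δ_G(S)`. -/
def boundary (G : Multigraph) (S : Set G.V) : Set G.E :=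
  {e | ¬ ((G.ends e).1 ∈ S ↔ (G.ends e).2 ∈ S)}

/-- Incidence between an edge and a vertex. -/
def Inc (G : Multigraph) (e : G.E) (v : G.V) : Prop :=
  (G.ends e).1 = v ∨ (G.ends e).2 = v

lemma mem_boundary_iff_of_ends (h : G.ends e = (u, v) ∨ G.ends e = (v, u)) :
    e ∈ G.boundary S ↔ ¬ (u ∈ S ↔ v ∈ S) := by
  rcases h with h | h <;> simp only [boundary, Set.mem_ofPred_eq, h, iff_comm]

lemma inc_iff_of_ends (h : G.ends e = (u, v) ∨ G.ends e = (v, u)) :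
    G.Inc e x ↔ u = x ∨ v = x := by
  rcases h with h | h <;> simp only [Inc, h, or_comm]

lemma mem_boundary_singleton : e ∈ G.boundary {v} ↔ G.Inc e v := by
  have := G.loopless e
  simp only [boundary, Inc, Set.mem_ofPred_eq, Set.mem_singleton_iff]
  grind

lemma boundary_compl : G.boundary Sᶜ = G.boundary S := by
  ext e; simp only [boundary, Set.mem_ofPred_eq, Set.mem_compl_iff, not_iff_not]

lemma mem_boundary_compl_singleton : e ∈ G.boundary {v}ᶜ ↔ G.Inc e v := by
  rw [boundary_compl, mem_boundary_singleton]

lemma delta_eq_ncard_boundary : G.delta S = (G.boundary S).ncard := rfl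

@[simp] lemma delta_empty : G.delta ∅ = 0 := by simp [delta]

@[simp] lemma delta_univ : G.delta Set.univ = 0 := by simp [delta]

@[simp] lemma delta_compl : G.delta Sᶜ = G.delta S :=
  congrArg Set.ncard boundary_compl

lemma delta_singleton : G.delta {v} = G.degree v :=
  congrArg Set.ncard (Set.ext fun _ => mem_boundary_singleton)

lemma mem_boundary_insert_iff (he : ¬ G.Inc e x) :
    e ∈ G.boundary (insert x S) ↔ e ∈ G.boundary S := by
  obtain ⟨h₁, h₂⟩ := not_or.mp he
  simp only [boundary, Set.mem_ofPred_eq, Set.mem_insert_iff, h₁, h₂, false_or]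

lemma delta_insert_le : G.delta (insert x S) ≤ G.delta S + G.degree x := by
  refine (Set.ncard_le_ncard fun e he => ?_).trans (Set.ncard_union_le _ _)
  exact or_iff_not_imp_right.mpr fun hx => (mem_boundary_insert_iff hx).mp he

lemma delta_le_delta_insert_add_degree : G.delta S ≤ G.delta (insert x S) + G.degree x := by
  refine (Set.ncard_le_ncard fun e he => ?_).trans (Set.ncard_union_le _ _)
  exact or_iff_not_imp_right.mpr fun hx => (mem_boundary_insert_iff hx).mpr he

lemma delta_insert_of_forall_notMem (hx : x ∉ S) (h : ∀ e, G.Inc e x → e ∉ G.boundary S) :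
    G.delta (insert x S) = G.delta S + G.degree x := by
  have hunion : G.boundary (insert x S) = G.boundary S ∪ {e | G.Inc e x} := by
    ext e
    by_cases he : G.Inc e x
    · refine iff_of_true ?_ (Or.inr he)
      have := G.loopless e
      have := h e he
      simp only [boundary, Inc, Set.mem_ofPred_eq, Set.mem_insert_iff] at *
      grind
    · simp [mem_boundary_insert_iff he, he]
  rw [delta_eq_ncard_boundary, hunion, Set.ncard_union_eq]
  · rfl
  · exact Set.disjoint_right.mpr h

end Boundary

section Cutwidth

variable {G : Multigraph} {k : ℕ}

lemma cwOrd_le_iff {ρ : G.V → ℕ} : G.cwOrd ρ ≤ k ↔ ∀ n, G.delta {u | ρ u < n} ≤ k := by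
  have hbdd : BddAbove {w | ∃ v : G.V, w = G.delta {u | ρ u ≤ ρ v}} :=
    ((Set.finite_range fun v : G.V => G.delta {u | ρ u ≤ ρ v}).subset
      (by rintro _ ⟨v, rfl⟩; exact ⟨v, rfl⟩)).bddAbove
  constructor
  · intro h n
    rcases Set.eq_empty_or_nonempty {u | ρ u < n} with hn | hn
    · rw [hn, delta_empty]; exact Nat.zero_le k
    · obtain ⟨v, hv, hmax⟩ := Set.exists_max_image _ ρ (Set.toFinite {u | ρ u < n}) hn
      have hprefix : {u | ρ u < n} = {u | ρ u ≤ ρ v} :=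
        Set.ext fun u => ⟨hmax u, fun hu => Nat.lt_of_le_of_lt hu hv⟩
      rw [hprefix]
      exact le_trans (le_csSup hbdd ⟨v, rfl⟩) h
  · rintro h
    refine csSup_le' ?_
    rintro _ ⟨v, rfl⟩
    simpa only [Nat.lt_succ_iff] using h (ρ v + 1)

lemma cutwidth_le_iff_exists_ordering :
    G.cutwidth ≤ k ↔
      ∃ ρ : G.V → ℕ, Function.Injective ρ ∧ ∀ n, G.delta {u | ρ u < n} ≤ k := by
  constructor
  · intro h
    obtain ⟨n, ⟨f⟩⟩ := Finite.exists_equiv_fin G.V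
    have hne : {w | ∃ ρ : G.V → ℕ, Function.Injective ρ ∧ G.cwOrd ρ = w}.Nonempty :=
      ⟨_, _, Fin.val_injective.comp f.injective, rfl⟩
    obtain ⟨ρ, hρ, hw⟩ := Nat.sInf_mem hne
    exact ⟨ρ, hρ, cwOrd_le_iff.mp (hw.trans_le h)⟩
  · rintro ⟨ρ, hρ, h⟩
    exact le_trans (Nat.sInf_le ⟨ρ, hρ, rfl⟩) (cwOrd_le_iff.mpr h)

lemma exists_lt_delta_of_lt_cutwidth (h : k < G.cutwidth) {ρ : G.V → ℕ}
    (hρ : Function.Injective ρ) : ∃ n, k < G.delta {u | ρ u < n} := by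
  by_contra! hle
  exact h.not_ge (cutwidth_le_iff_exists_ordering.mpr ⟨ρ, hρ, hle⟩)

lemma cutwidth_le_of_sweep (h : Sweep (fun S => G.delta S ≤ k) ∅ Set.univ) : G.cutwidth ≤ k := by
  obtain ⟨ρ, n, huniv, hinj, hρ⟩ := h.exists_ordering (by simp)
  refine cutwidth_le_iff_exists_ordering.mpr ⟨ρ, Set.injOn_univ.mp hinj, fun m => ?_⟩
  rcases le_total m n with hm | hm
  · exact hρ m hm
  · have hlt : ∀ u, ρ u < n := fun u => huniv.subset (Set.mem_univ u)
    simp [fun u => (hlt u).trans_le hm]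

end Cutwidth

/-! ### Reductions and immersions -/

/-- A set of edges of `G` on which a reduction can be performed: a single edge, which is deleted,
or two edges sharing an endpoint, which are lifted, that is, replaced by one edge between their
other endpoints. -/
structure IsReduction (G : Multigraph) (D : Set G.E) : Prop where
  nonempty : D.Nonempty
  ncard_le_two : D.ncard ≤ 2
  exists_inc : ∃ v, ∀ e ∈ D, G.Inc e v

/-- A set of edges of `G` as large as the boundary of `S` in the reduction of `G` on `D`: deleting
an edge of the boundary, or lifting two edges of it, removes them from the boundary, while lifting
two edges only one of which is in the boundary produces an edge of the new boundary. -/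
def reducedBoundary (G : Multigraph) (D : Set G.E) (S : Set G.V) : Set G.E :=
  {e ∈ G.boundary S | D ⊆ G.boundary S → e ∉ D}

section ReducedBoundary

variable {G : Multigraph} {D : Set G.E} {S : Set G.V}

lemma isReduction_singleton (e : G.E) : G.IsReduction {e} where
  nonempty := Set.singleton_nonempty e
  ncard_le_two := (Set.ncard_singleton e).trans_le one_le_two
  exists_inc := ⟨(G.ends e).1, fun _ h => Or.inl (h ▸ rfl)⟩

lemma reducedBoundary_subset : G.reducedBoundary D S ⊆ G.boundary S := fun _ h => h.1

lemma mem_reducedBoundary_of_notMem {e : G.E} (he : e ∈ G.boundary S) (hD : e ∉ D) :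
    e ∈ G.reducedBoundary D S := ⟨he, fun _ => hD⟩

lemma ncard_reducedBoundary_le : (G.reducedBoundary D S).ncard ≤ G.delta S :=
  Set.ncard_le_ncard reducedBoundary_subset

lemma ncard_reducedBoundary_add_ncard (h : D ⊆ G.boundary S) :
    (G.reducedBoundary D S).ncard + D.ncard = G.delta S := by
  have hdiff : G.reducedBoundary D S = G.boundary S \ D := by
    simp only [reducedBoundary, h, forall_const]; rfl
  rw [hdiff, Set.ncard_sdiff_add_ncard_of_subset h]; rfl

lemma ncard_reducedBoundary_le_of_subset {k : ℕ} (hD : D ⊆ G.boundary S)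
    (h : G.delta S ≤ k + D.ncard) : (G.reducedBoundary D S).ncard ≤ k := by
  rw [← ncard_reducedBoundary_add_ncard hD] at h
  exact Nat.le_of_add_le_add_right h

lemma ncard_reducedBoundary_lt {B : Set G.E} (hD : D.Nonempty) (hDB : D ⊆ B)
    (hB : G.boundary S ⊆ B) : (G.reducedBoundary D S).ncard < B.ncard := by
  refine Set.ncard_lt_ncard ⟨reducedBoundary_subset.trans hB, fun h => ?_⟩
  obtain ⟨d, hd⟩ := hD
  exact (h (hDB hd)).2 (fun e he => (h (hDB he)).1) hd

end ReducedBoundary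

namespace Walk

variable {G : Multigraph}

lemma exists_mem_edges_mem_boundary {S : Set G.V} :
    ∀ {u v : G.V} (p : G.Walk u v), ¬ (u ∈ S ↔ v ∈ S) → ∃ g ∈ p.edges, g ∈ G.boundary S
  | _, _, .nil _, h => absurd Iff.rfl h
  | _, _, .cons e he p, h => by
    by_cases heS : e ∈ G.boundary S
    · exact ⟨e, List.mem_cons_self, heS⟩
    · rw [mem_boundary_iff_of_ends he, not_not] at heS
      obtain ⟨g, hg, hgS⟩ := p.exists_mem_edges_mem_boundary fun hv => h (heS.trans hv)
      exact ⟨g, List.mem_cons_of_mem e hg, hgS⟩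

lemma start_mem_support {u v : G.V} (p : G.Walk u v) : u ∈ p.support := by
  cases p <;> exact List.mem_cons_self

lemma mem_support_of_inc {g : G.E} {x : G.V} (hx : G.Inc g x) :
    ∀ {u v : G.V} (p : G.Walk u v), g ∈ p.edges → x ∈ p.support
  | _, _, .nil _, hg => absurd hg List.not_mem_nil
  | u, _, .cons (v := v) e he p, hg => by
    rcases List.mem_cons.mp hg with rfl | hg
    · rcases (inc_iff_of_ends he).mp hx with rfl | rfl
      · exact List.mem_cons_self
      · exact List.mem_cons_of_mem u p.start_mem_support
    · exact List.mem_cons_of_mem u (mem_support_of_inc hx p hg)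

/-- A path with at least two edges persists in the reduction on its first two edges. -/
lemma eq_single_or_exists_isReduction {u v : G.V} (p : G.Walk u v) (huv : u ≠ v)
    (hp : p.support.Nodup) :
    (∃ g, p.edges = [g] ∧ (G.ends g = (u, v) ∨ G.ends g = (v, u))) ∨
      ∃ D, G.IsReduction D ∧ (∀ e ∈ D, e ∈ p.edges) ∧
        ∀ S, ¬ (u ∈ S ↔ v ∈ S) → ∃ g ∈ p.edges, g ∈ G.reducedBoundary D S := by
  rcases p with _ | @⟨_, b, _, e, he, _ | @⟨_, c, _, f, hf, p⟩⟩
  · exact absurd rfl huv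
  · exact Or.inl ⟨e, rfl, he⟩
  simp only [support, List.nodup_cons, List.mem_cons, not_or] at hp
  obtain ⟨⟨-, hup⟩, hbp, -⟩ := hp
  have heu : G.Inc e u := (inc_iff_of_ends he).mpr (Or.inl rfl)
  have heb : G.Inc e b := (inc_iff_of_ends he).mpr (Or.inr rfl)
  have hfb : G.Inc f b := (inc_iff_of_ends hf).mpr (Or.inl rfl)
  refine Or.inr ⟨{e, f}, ⟨Set.insert_nonempty e {f}, ?_, b, ?_⟩, ?_, fun S hS => ?_⟩
  · exact (Set.ncard_insert_le e {f}).trans_eq (congrArg (· + 1) (Set.ncard_singleton f))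
  · rintro _ (rfl | rfl) <;> assumption
  · rintro _ (rfl | rfl) <;> simp only [edges, List.mem_cons, true_or, or_true]
  · by_cases hD : {e, f} ⊆ G.boundary S
    · obtain ⟨heS, hfS⟩ := Set.pair_subset_iff.mp hD
      rw [mem_boundary_iff_of_ends he] at heS
      rw [mem_boundary_iff_of_ends hf] at hfS
      obtain ⟨g, hg, hgS⟩ := p.exists_mem_edges_mem_boundary (S := S) (by tauto)
      refine ⟨g, List.mem_cons_of_mem e (List.mem_cons_of_mem f hg),
        mem_reducedBoundary_of_notMem hgS ?_⟩
      rintro (rfl | rfl)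
      · exact hup (mem_support_of_inc heu p hg)
      · exact hbp (mem_support_of_inc hfb p hg)
    · obtain ⟨g, hg, hgS⟩ := exists_mem_edges_mem_boundary (.cons e he (.cons f hf p)) hS
      exact ⟨g, hg, hgS, fun h => absurd h hD⟩

end Walk

namespace ImmersionModel

variable {H G : Multigraph}

lemma isomorphic_of_forall_edges_eq_singleton (M : ImmersionModel H G)
    (hused : ∀ e, ∃ h, e ∈ (M.emap h).edges) (hinc : ∀ v, ∃ e, G.Inc e v)
    (hsingle : ∀ h, ∃ g, (M.emap h).edges = [g] ∧
      (G.ends g = (M.vmap (H.ends h).1, M.vmap (H.ends h).2) ∨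
        G.ends g = (M.vmap (H.ends h).2, M.vmap (H.ends h).1))) : H.Isomorphic G := by
  choose f hf hends using hsingle
  have hfinj : Function.Injective f := fun a b hab => by
    by_contra hne
    exact M.edgeDisj a b hne (f a) (by simp [hf]) (by simp [hf, hab])
  have hfsurj : Function.Surjective f := fun e => by
    obtain ⟨h, he⟩ := hused e
    exact ⟨h, (List.mem_singleton.mp (hf h ▸ he)).symm⟩
  have hvsurj : Function.Surjective M.vmap := fun v => by
    obtain ⟨e, he⟩ := hinc v
    obtain ⟨h, rfl⟩ := hfsurj e
    rcases (inc_iff_of_ends (hends h)).mp he with rfl | rfl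
    exacts [⟨_, rfl⟩, ⟨_, rfl⟩]
  exact ⟨⟨.ofBijective _ ⟨M.inj, hvsurj⟩, .ofBijective f ⟨hfinj, hfsurj⟩, hends⟩⟩

/-- Every proper immersion factors through a reduction. -/
lemma exists_isReduction (M : ImmersionModel H G) (hiso : ¬ H.Isomorphic G)
    (hinc : ∀ v, ∃ e, G.Inc e v) :
    ∃ D, G.IsReduction D ∧ ∀ S, ∀ h ∈ H.boundary (M.vmap ⁻¹' S),
      ∃ g ∈ (M.emap h).edges, g ∈ G.reducedBoundary D S := by
  by_cases hused : ∀ e, ∃ h, e ∈ (M.emap h).edges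
  · obtain ⟨h₀, hsingle⟩ := not_forall.mp fun hsingle =>
      hiso (M.isomorphic_of_forall_edges_eq_singleton hused hinc hsingle)
    obtain ⟨D, hD, hD₀, hDS⟩ := ((M.emap h₀).eq_single_or_exists_isReduction
      (fun heq => H.loopless h₀ (M.inj heq)) (M.isPath h₀)).resolve_left hsingle
    refine ⟨D, hD, fun S h hh => ?_⟩
    by_cases hne : h = h₀
    · subst hne; exact hDS S hh
    · obtain ⟨g, hg, hgS⟩ := (M.emap h).exists_mem_edges_mem_boundary hh
      exact ⟨g, hg, mem_reducedBoundary_of_notMem hgS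
        fun hgD => M.edgeDisj h h₀ hne g hg (hD₀ g hgD)⟩
  · push Not at hused
    obtain ⟨e, he⟩ := hused
    refine ⟨{e}, isReduction_singleton e, fun S h hh => ?_⟩
    obtain ⟨g, hg, hgS⟩ := (M.emap h).exists_mem_edges_mem_boundary hh
    exact ⟨g, hg, mem_reducedBoundary_of_notMem hgS (by rintro rfl; exact he h hg)⟩

end ImmersionModel

/-! ### Obstructions as disjoint unions -/

/-- An embedding of `G` into `W` as a subgraph. -/
structure Embedding (G W : Multigraph) where
  onV : G.V → W.V
  onE : G.E → W.E
  onV_injective : Function.Injective onV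
  onE_injective : Function.Injective onE
  ends_onE : ∀ e, W.ends (onE e) = (onV (G.ends e).1, onV (G.ends e).2)

namespace Embedding

variable {G W : Multigraph} (f : Embedding G W) {e : G.E} {v : G.V} {D : Set G.E} {S : Set W.V}

lemma onE_mem_boundary_iff : f.onE e ∈ W.boundary S ↔ e ∈ G.boundary (f.onV ⁻¹' S) :=
  mem_boundary_iff_of_ends (Or.inl (f.ends_onE e))

lemma inc_onE_iff {w : W.V} : W.Inc (f.onE e) w ↔ ∃ v, f.onV v = w ∧ G.Inc e v := by
  rw [inc_iff_of_ends (Or.inl (f.ends_onE e))]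
  constructor
  · rintro (rfl | rfl)
    exacts [⟨_, rfl, Or.inl rfl⟩, ⟨_, rfl, Or.inr rfl⟩]
  · rintro ⟨v, rfl, rfl | rfl⟩
    exacts [Or.inl rfl, Or.inr rfl]

lemma inc_onE_onV_iff : W.Inc (f.onE e) (f.onV v) ↔ G.Inc e v := by
  simp only [inc_onE_iff, f.onV_injective.eq_iff, exists_eq_left]

lemma onE_mem_reducedBoundary_iff :
    f.onE e ∈ W.reducedBoundary (f.onE '' D) S ↔ e ∈ G.reducedBoundary D (f.onV ⁻¹' S) := by
  have hsub : f.onE '' D ⊆ W.boundary S ↔ D ⊆ G.boundary (f.onV ⁻¹' S) :=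
    Set.image_subset_iff.trans (forall₂_congr fun _ _ => f.onE_mem_boundary_iff)
  simp only [reducedBoundary, Set.mem_sep_iff, onE_mem_boundary_iff, hsub,
    f.onE_injective.mem_set_image]

lemma isReduction_of_image (hD : W.IsReduction (f.onE '' D)) : G.IsReduction D := by
  have hne := Set.image_nonempty.mp hD.nonempty
  refine ⟨hne, Set.ncard_image_of_injective D f.onE_injective ▸ hD.ncard_le_two, ?_⟩
  obtain ⟨w, hw⟩ := hD.exists_inc
  obtain ⟨e₀, he₀⟩ := hne
  obtain ⟨v, rfl, -⟩ := f.inc_onE_iff.mp (hw _ ⟨e₀, he₀, rfl⟩)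
  exact ⟨v, fun e he => f.inc_onE_onV_iff.mp (hw _ ⟨e, he, rfl⟩)⟩

end Embedding

lemma ncard_le_ncard_of_forall_exists {α β : Type*} [Finite β] {s : Set α} {t : Set β}
    (r : α → β → Prop) (hs : ∀ a ∈ s, ∃ b ∈ t, r a b) (hr : ∀ a a' b, r a b → r a' b → a = a') :
    s.ncard ≤ t.ncard := by
  choose f hft hfr using hs
  refine Nat.card_le_card_of_injective (fun a : s => (⟨f a a.2, hft a a.2⟩ : t)) fun a a' haa' => ?_
  have heq : f a a.2 = f a' a'.2 := congrArg Subtype.val haa'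
  exact Subtype.ext (hr a a' _ (hfr a a.2) (heq ▸ hfr a' a'.2))

section DeleteEdges

variable {G H : Multigraph} {k w : ℕ}

lemma delta_deleteEdges {F : Set G.E} {S : Set G.V} :
    (G.deleteEdges F).delta S = (G.boundary S \ F).ncard := by
  have himage : Subtype.val '' (G.deleteEdges F).boundary S = G.boundary S \ F := by
    ext e
    exact ⟨fun ⟨⟨_, hF⟩, hS, heq⟩ => heq ▸ ⟨hS, hF⟩, fun ⟨hS, hF⟩ => ⟨⟨e, hF⟩, hS, rfl⟩⟩
  exact himage ▸ (Set.ncard_image_of_injective _ Subtype.val_injective).symm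

lemma dcw_le_iff : dcw k G ≤ w ↔ ∃ F, (G.deleteEdges F).cutwidth ≤ k ∧ F.ncard ≤ w := by
  constructor
  · intro h
    have huniv : (G.deleteEdges Set.univ).cutwidth ≤ k :=
      cutwidth_le_of_sweep <| .of_forall_between (Set.empty_subset _) fun U _ _ => by
        refine delta_deleteEdges.trans_le ?_
        rw [Set.sdiff_univ, Set.ncard_empty]; exact Nat.zero_le k
    have hne : {n | ∃ F, (G.deleteEdges F).cutwidth ≤ k ∧ F.ncard = n}.Nonempty :=
      ⟨_, Set.univ, huniv, rfl⟩
    obtain ⟨F, hF, hw⟩ := Nat.sInf_mem hne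
    exact ⟨F, hF, hw.trans_le h⟩
  · rintro ⟨F, hF, hw⟩
    exact le_trans (Nat.sInf_le ⟨F, hF, rfl⟩) hw

lemma ImmersionModel.dcw_le (M : ImmersionModel H G) {B : Set G.V → Set G.E}
    (hB : ∀ S, ∀ h ∈ H.boundary (M.vmap ⁻¹' S), ∃ g ∈ (M.emap h).edges, g ∈ B S)
    {X : Set G.E} (hX : Sweep (fun S => (B S \ X).ncard ≤ k) ∅ Set.univ) :
    dcw k H ≤ X.ncard := by
  have hdisj : ∀ h h' g, g ∈ (M.emap h).edges → g ∈ (M.emap h').edges → h = h' :=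
    fun h h' g hg hg' => by_contra fun hne => M.edgeDisj h h' hne g hg hg'
  let F : Set H.E := {h | ∃ g ∈ X, g ∈ (M.emap h).edges}
  refine dcw_le_iff.mpr ⟨F, cutwidth_le_of_sweep (hX.preimage M.inj fun S hS => ?_), ?_⟩
  · refine delta_deleteEdges.trans_le (le_trans ?_ hS)
    refine ncard_le_ncard_of_forall_exists (fun h g => g ∈ (M.emap h).edges) ?_ hdisj
    rintro h ⟨hhS, hhF⟩
    obtain ⟨g, hg, hgB⟩ := hB S h hhS
    exact ⟨g, ⟨hgB, fun hgX => hhF ⟨g, hgX, hg⟩⟩, hg⟩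
  · exact ncard_le_ncard_of_forall_exists (fun h g => g ∈ (M.emap h).edges) (fun _ hh => hh) hdisj

end DeleteEdges

/-- A connected graph of cutwidth greater than `k` all of whose reductions have cutwidth at most
`k`. Connectedness says that only the trivial sets of vertices have no boundary, and the width of a
reduction is read off in `G` through `reducedBoundary`. -/
structure IsCutObstruction (k : ℕ) (G : Multigraph) : Prop where
  lt_cutwidth : k < G.cutwidth
  eq_empty_or_univ : ∀ S, G.delta S = 0 → S = ∅ ∨ S = Set.univ
  sweep_reduced : ∀ D, G.IsReduction D →
    Sweep (fun S => (G.reducedBoundary D S).ncard ≤ k) ∅ Set.univ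

namespace IsCutObstruction

variable {k : ℕ} {G : Multigraph}

lemma exists_delta_pos (hG : IsCutObstruction k G) : ∃ S, 0 < G.delta S := by
  by_contra! h
  refine hG.lt_cutwidth.not_ge (cutwidth_le_of_sweep ?_)
  exact .of_forall_between (Set.empty_subset _) fun U _ _ => (h U).trans (Nat.zero_le k)

lemma nonempty_edges (hG : IsCutObstruction k G) : Nonempty G.E := by
  obtain ⟨S, hS⟩ := hG.exists_delta_pos
  obtain ⟨e, -⟩ := Set.nonempty_of_ncard_ne_zero hS.ne'
  exact ⟨e⟩

lemma exists_inc (hG : IsCutObstruction k G) (v : G.V) : ∃ e, G.Inc e v := by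
  by_contra! h
  have hv : G.delta {v} = 0 := by
    rw [delta_singleton, degree, Set.ncard_eq_zero]
    exact Set.eq_empty_of_forall_notMem h
  obtain ⟨e⟩ := hG.nonempty_edges
  have huniv : ∀ u, u = v :=
    Set.eq_univ_iff_forall.mp ((hG.eq_empty_or_univ _ hv).resolve_left (Set.singleton_ne_empty v))
  exact h e (Or.inl (huniv _))

end IsCutObstruction

lemma Sweep.sigma {ι : Type*} [Finite ι] {V : ι → Type*} {P : ∀ i, Set (V i) → Prop}
    (h : ∀ i, Sweep (P i) ∅ Set.univ) :
    Sweep (fun S : Set (Σ i, V i) => ∃ j, P j (Sigma.mk j ⁻¹' S) ∧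
      ∀ i ≠ j, Sigma.mk i ⁻¹' S = ∅ ∨ Sigma.mk i ⁻¹' S = Set.univ) ∅ Set.univ := by
  suffices hs : ∀ s : Set ι, Sweep _ ∅ (Sigma.fst ⁻¹' s) from hs Set.univ
  intro s
  induction s, Set.toFinite s using Set.Finite.induction_on with
  | empty => exact refl _ _
  | @insert j s hj _ ih =>
    let incl : V j → Σ i, V i := Sigma.mk j
    have hempty : Sigma.fst ⁻¹' s ∪ incl '' ∅ = Sigma.fst ⁻¹' s := by simp
    have huniv : Sigma.fst ⁻¹' s ∪ incl '' Set.univ = Sigma.fst ⁻¹' insert j s := by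
      ext ⟨i, v⟩; by_cases hi : i = j
      · subst hi; simp [incl]
      · simp [incl, hi]
    refine ih.trans ?_
    rw [← huniv]
    nth_rw 1 [← hempty]
    refine (h j).union_image incl _ fun U hU => ⟨j, ?_, fun i hi => ?_⟩
    · convert hU
      ext v; simp [incl, hj]
    · by_cases his : i ∈ s
      · right; ext v; simp [incl, his]
      · left; ext v; simp [incl, his, Ne.symm hi]

section SigmaUnion

variable {k m : ℕ} {Gs : Fin m → Multigraph}

/-- The inclusion of a part into a disjoint union. -/
def sigmaEmbedding (Gs : Fin m → Multigraph) (i : Fin m) : Embedding (Gs i) (sigmaUnion Gs) where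
  onV v := (⟨i, v⟩ : Σ i, (Gs i).V)
  onE e := (⟨i, e⟩ : Σ i, (Gs i).E)
  onV_injective _ _ h := sigma_mk_injective (β := fun i => (Gs i).V) h
  onE_injective _ _ h := sigma_mk_injective (β := fun i => (Gs i).E) h
  ends_onE _ := rfl

lemma sigmaUnion_inc_fst {e : (sigmaUnion Gs).E} {v : (sigmaUnion Gs).V}
    (h : (sigmaUnion Gs).Inc e v) : e.1 = v.1 := by
  rcases h with rfl | rfl <;> rfl

lemma le_dcw_sigmaUnion (hGs : ∀ i, k < (Gs i).cutwidth) : m ≤ dcw k (sigmaUnion Gs) := by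
  by_contra! hlt
  obtain ⟨F, hF, hcard⟩ := dcw_le_iff.mp (le_refl (dcw k (sigmaUnion Gs)))
  obtain ⟨ρ, hρ, hwidth⟩ := cutwidth_le_iff_exists_ordering.mp hF
  obtain ⟨i, hi⟩ : ∃ i, ∀ e, (sigmaEmbedding Gs i).onE e ∉ F := by
    by_contra! h
    choose e he using h
    have hle : (Set.univ : Set (Fin m)).ncard ≤ F.ncard :=
      Set.ncard_le_ncard_of_injOn (fun i => (sigmaEmbedding Gs i).onE (e i)) (fun i _ => he i)
        fun i _ j _ hij => congrArg Sigma.fst hij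
    rw [Set.ncard_univ, Nat.card_fin] at hle
    exact absurd (hle.trans hcard) hlt.not_ge
  obtain ⟨n, hn⟩ := exists_lt_delta_of_lt_cutwidth (hGs i)
    (hρ.comp (sigmaEmbedding Gs i).onV_injective)
  refine hn.not_ge (le_trans ?_ (delta_deleteEdges.symm.trans_le (hwidth n)))
  exact Set.ncard_le_ncard_of_injOn (sigmaEmbedding Gs i).onE
    (fun e he => ⟨(sigmaEmbedding Gs i).onE_mem_boundary_iff.mpr he, hi e⟩)
    (sigmaEmbedding Gs i).onE_injective.injOn

lemma IsReduction.exists_eq_image_sigmaEmbedding {D : Set (sigmaUnion Gs).E}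
    (hD : (sigmaUnion Gs).IsReduction D) :
    ∃ i D₀, (Gs i).IsReduction D₀ ∧ D = (sigmaEmbedding Gs i).onE '' D₀ := by
  obtain ⟨⟨i, v⟩, hv⟩ := hD.exists_inc
  have himage : (sigmaEmbedding Gs i).onE '' ((sigmaEmbedding Gs i).onE ⁻¹' D) = D := by
    refine Set.image_preimage_eq_of_subset fun ⟨j, e⟩ he => ?_
    obtain rfl : j = i := sigmaUnion_inc_fst (hv _ he)
    exact ⟨e, rfl⟩
  exact ⟨i, _, (sigmaEmbedding Gs i).isReduction_of_image (himage.symm ▸ hD), himage.symm⟩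

/-- It suffices to reduce one part and to delete an arbitrary edge of each of the others. -/
lemma exists_sweep_reduced_sigmaUnion (hGs : ∀ i, IsCutObstruction k (Gs i))
    {D : Set (sigmaUnion Gs).E} (hD : (sigmaUnion Gs).IsReduction D) :
    ∃ X : Set (sigmaUnion Gs).E, X.ncard < m ∧
      Sweep (fun S => ((sigmaUnion Gs).reducedBoundary D S \ X).ncard ≤ k) ∅ Set.univ := by
  obtain ⟨i₀, D₀, hD₀, rfl⟩ := hD.exists_eq_image_sigmaEmbedding
  let ε i := (hGs i).nonempty_edges.some
  let R := Function.update (fun i => ({ε i} : Set (Gs i).E)) i₀ D₀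
  have hR : ∀ i, (Gs i).IsReduction (R i) := fun i => by
    by_cases hi : i = i₀
    · subst hi; simpa only [R, Function.update_self] using hD₀
    · simpa only [R, Function.update_of_ne hi] using isReduction_singleton (ε i)
  refine ⟨(fun i => (sigmaEmbedding Gs i).onE (ε i)) '' {i₀}ᶜ, ?_, ?_⟩
  · calc _ ≤ ({i₀}ᶜ : Set (Fin m)).ncard := Set.ncard_image_le
      _ < m := by
        rw [Set.ncard_compl, Set.ncard_singleton, Nat.card_fin]
        exact Nat.sub_lt i₀.pos one_pos
  · refine (Sweep.sigma fun i => (hGs i).sweep_reduced (R i) (hR i)).mono fun S ⟨j, hj, htriv⟩ => ?_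
    rw [← Set.ncard_image_of_injective _ (sigmaEmbedding Gs j).onE_injective] at hj
    refine (Set.ncard_le_ncard ?_).trans hj
    rintro ⟨i, e⟩ ⟨heD, heX⟩
    have heS : e ∈ (Gs i).boundary ((sigmaEmbedding Gs i).onV ⁻¹' S) :=
      (sigmaEmbedding Gs i).onE_mem_boundary_iff.mp (reducedBoundary_subset heD)
    obtain rfl : i = j := by
      by_contra hne
      have htrivial : (sigmaEmbedding Gs i).onV ⁻¹' S = ∅ ∨
        (sigmaEmbedding Gs i).onV ⁻¹' S = Set.univ := htriv i hne
      rcases htrivial with h | h <;> rw [h] at heS <;> simp [boundary] at heS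
    refine ⟨e, ?_, rfl⟩
    by_cases hi : i = i₀
    · subst hi
      simp only [R, Function.update_self]
      exact (sigmaEmbedding Gs i).onE_mem_reducedBoundary_iff.mp heD
    · simp only [R, Function.update_of_ne hi]
      exact mem_reducedBoundary_of_notMem heS fun he =>
        heX ⟨i, hi, congrArg _ (Set.mem_singleton_iff.mp he).symm⟩

lemma dcw_lt_of_immersion_sigmaUnion (hGs : ∀ i, IsCutObstruction k (Gs i)) {H : Multigraph}
    (hH : Immersion H (sigmaUnion Gs)) (hiso : ¬ H.Isomorphic (sigmaUnion Gs)) :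
    dcw k H < m := by
  obtain ⟨M⟩ := hH
  have hinc : ∀ v, ∃ e, (sigmaUnion Gs).Inc e v := fun ⟨i, v⟩ => by
    obtain ⟨e, he⟩ := (hGs i).exists_inc v
    exact ⟨_, (sigmaEmbedding Gs i).inc_onE_onV_iff.mpr he⟩
  obtain ⟨D, hD, hDS⟩ := M.exists_isReduction hiso hinc
  obtain ⟨X, hX, hsweep⟩ := exists_sweep_reduced_sigmaUnion hGs hD
  exact (M.dcw_le hDS hsweep).trans_lt hX

theorem sigmaUnion_mem_obstructions {w : ℕ} {Gs : Fin (w + 1) → Multigraph}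
    (hGs : ∀ i, IsCutObstruction k (Gs i)) :
    sigmaUnion Gs ∈ obstructions Immersion (dcwClass w k) := by
  constructor
  · exact Nat.not_le.mpr (le_dcw_sigmaUnion fun i => (hGs i).lt_cutwidth)
  · exact fun H hH hiso => Nat.lt_succ_iff.mp (dcw_lt_of_immersion_sigmaUnion hGs hH hiso)

end SigmaUnion

section Isomorphism

lemma exists_forall_eq_of_forall_ends {G : Multigraph} [Nonempty G.V]
    (hG : ∀ S, G.delta S = 0 → S = ∅ ∨ S = Set.univ) {α : Type*} {f : G.V → α}
    (hf : ∀ e, f (G.ends e).1 = f (G.ends e).2) : ∃ a, ∀ v, f v = a := by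
  obtain ⟨v₀⟩ := ‹Nonempty G.V›
  have hδ : G.delta {v | f v = f v₀} = 0 := by simp [delta, hf]
  have huniv := (hG _ hδ).resolve_left (Set.Nonempty.ne_empty ⟨v₀, rfl⟩)
  exact ⟨f v₀, Set.eq_univ_iff_forall.mp huniv⟩

variable {m : ℕ} {A B : Fin m → Multigraph}

lemma Iso.fst_fv_eq_fst_fe (φ : Iso (sigmaUnion A) (sigmaUnion B)) {e : (sigmaUnion A).E}
    {v : (sigmaUnion A).V} (h : (sigmaUnion A).Inc e v) : (φ.fv v).1 = (φ.fe e).1 := by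
  refine (sigmaUnion_inc_fst ((inc_iff_of_ends (φ.pres e)).mpr ?_)).symm
  exact h.imp (congrArg φ.fv) (congrArg φ.fv)

lemma exists_perm_of_isomorphic_sigmaUnion [∀ i, Nonempty (A i).V] [∀ i, Nonempty (B i).V]
    (hA : ∀ i S, (A i).delta S = 0 → S = ∅ ∨ S = Set.univ)
    (h : (sigmaUnion A).Isomorphic (sigmaUnion B)) :
    ∃ π : Equiv.Perm (Fin m), ∀ i, Nat.card (A i).E = Nat.card (B (π i)).E := by
  obtain ⟨φ⟩ := h
  have hconst : ∀ i, ∃ j, ∀ v : (A i).V, (φ.fv ⟨i, v⟩).1 = j := fun i =>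
    exists_forall_eq_of_forall_ends (hA i) fun e =>
      (φ.fst_fv_eq_fst_fe (e := ⟨i, e⟩) (Or.inl rfl)).trans
        (φ.fst_fv_eq_fst_fe (e := ⟨i, e⟩) (Or.inr rfl)).symm
  choose π hπ using hconst
  have hsurj : Function.Surjective π := fun j => by
    obtain ⟨b⟩ := ‹∀ i, Nonempty (B i).V› j
    obtain ⟨⟨i, a⟩, ha⟩ := φ.fv.surjective ⟨j, b⟩
    exact ⟨i, (hπ i a).symm.trans (congrArg Sigma.fst ha)⟩
  have hbij : Function.Bijective π := ⟨Finite.injective_iff_surjective.mpr hsurj, hsurj⟩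
  have hedges : ∀ i (e : (sigmaUnion A).E), e.1 = i ↔ (φ.fe e).1 = π i := fun i e => by
    rw [← φ.fst_fv_eq_fst_fe (Or.inl rfl), ← hbij.1.eq_iff]
    exact Eq.congr_left (hπ e.1 _).symm
  refine ⟨.ofBijective π hbij, fun i => Nat.card_congr ?_⟩
  exact ((Equiv.sigmaSubtype i).symm.trans (φ.fe.subtypeEquiv (hedges i))).trans
    (Equiv.sigmaSubtype (π i))

end Isomorphism

/-! ### Wedges -/

section WedgeVertices

variable {ι : Type*} {V : ι → Type*} (x : ∀ i, V i) {i j : ι}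

open Classical in
/-- The map of `V i` to the wedge of the pointed types `(V i, x i)`, in which `none` is the common
image of the base points. -/
noncomputable def wedgeIncl (i : ι) (v : V i) : Option (Σ i, {v : V i // v ≠ x i}) :=
  if h : v = x i then none else some ⟨i, v, h⟩

variable {x}

lemma wedgeIncl_base : wedgeIncl x i (x i) = none := dif_pos rfl

lemma wedgeIncl_of_ne {v : V i} (h : v ≠ x i) : wedgeIncl x i v = some ⟨i, v, h⟩ := dif_neg h

lemma wedgeIncl_eq_none_iff {v : V i} : wedgeIncl x i v = none ↔ v = x i := by
  simp [wedgeIncl]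

lemma wedgeIncl_injective (i : ι) : Function.Injective (wedgeIncl x i) := by
  intro u v h
  by_cases hu : u = x i <;> by_cases hv : v = x i <;> simp_all [wedgeIncl]

lemma wedgeIncl_eq_iff_of_ne (hij : i ≠ j) {u : V i} {v : V j} :
    wedgeIncl x i u = wedgeIncl x j v ↔ u = x i ∧ v = x j := by
  by_cases hu : u = x i <;> by_cases hv : v = x j <;> simp [wedgeIncl, hu, hv, hij]

lemma exists_wedgeIncl_eq [Nonempty ι] (w : Option (Σ i, {v : V i // v ≠ x i})) :
    ∃ i v, wedgeIncl x i v = w := by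
  rcases w with _ | ⟨i, v, hv⟩
  · exact ⟨Classical.arbitrary ι, x _, wedgeIncl_base⟩
  · exact ⟨i, v, wedgeIncl_of_ne hv⟩

lemma preimage_image_wedgeIncl_self (S : Set (V i)) :
    wedgeIncl x i ⁻¹' (wedgeIncl x i '' S) = S :=
  Set.preimage_image_eq S (wedgeIncl_injective i)

lemma preimage_image_wedgeIncl_of_notMem (hij : i ≠ j) {S : Set (V j)} (hS : x j ∉ S) :
    wedgeIncl x i ⁻¹' (wedgeIncl x j '' S) = ∅ := by
  refine Set.eq_empty_of_forall_notMem ?_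
  rintro u ⟨v, hv, huv⟩
  exact hS (((wedgeIncl_eq_iff_of_ne hij.symm).mp huv).1 ▸ hv)

lemma preimage_image_wedgeIncl_of_mem (hij : i ≠ j) {S : Set (V j)} (hS : x j ∈ S) :
    wedgeIncl x i ⁻¹' (wedgeIncl x j '' S) = {x i} := by
  ext u
  constructor
  · rintro ⟨v, -, huv⟩
    exact ((wedgeIncl_eq_iff_of_ne hij.symm).mp huv).2
  · rintro rfl
    exact ⟨x j, hS, wedgeIncl_base.trans wedgeIncl_base.symm⟩

lemma none_mem_image_wedgeIncl_iff {S : Set (V i)} :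
    none ∈ wedgeIncl x i '' S ↔ x i ∈ S := by
  simp only [Set.mem_image, wedgeIncl_eq_none_iff, exists_eq_right]

lemma some_mem_image_wedgeIncl_iff {S : Set (V i)} (hS : {x i}ᶜ ⊆ S)
    {s : Σ i, {v : V i // v ≠ x i}} : some s ∈ wedgeIncl x i '' S ↔ s.1 = i := by
  obtain ⟨j, v, hv⟩ := s
  constructor
  · rintro ⟨u, -, hu⟩
    by_contra hji
    exact hv ((wedgeIncl_eq_iff_of_ne (Ne.symm hji)).mp (hu.trans (wedgeIncl_of_ne hv).symm)).2
  · rintro rfl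
    exact ⟨v, hS hv, wedgeIncl_of_ne hv⟩

end WedgeVertices

section WedgeSweep

lemma sum_fin_three_of_ne {p q r : Fin 3} (hpq : p ≠ q) (hpr : p ≠ r) (hqr : q ≠ r)
    (f : Fin 3 → ℕ) : ∑ i, f i = f p + f q + f r := by
  have huniv : (Finset.univ : Finset (Fin 3)) = {p, q, r} := by decide +revert
  rw [huniv, Finset.sum_insert (by simp [hpq, hpr]), Finset.sum_pair hqr, add_assoc]

lemma Sweep.image_wedgeIncl {ι : Type*} [Fintype ι] {V : ι → Type*} {x : ∀ i, V i}
    {c : ∀ i, Set (V i) → ℕ} (hempty : ∀ i, c i ∅ = 0) {K : ℕ} {j : ι} {S T : Set (V j)}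
    (hT : x j ∉ T) (h : Sweep (fun U => c j U ≤ K) S T) :
    Sweep (fun U => ∑ i, c i (wedgeIncl x i ⁻¹' U) ≤ K) (wedgeIncl x j '' S)
      (wedgeIncl x j '' T) := by
  have himage := h.between.union_image (wedgeIncl x j) ∅
    (Q := fun U => ∑ i, c i (wedgeIncl x i ⁻¹' U) ≤ K) fun U ⟨hU, _, hUT⟩ => by
      have hxU : x j ∉ U := fun hx => hT (hUT hx)
      rwa [Set.empty_union, Finset.sum_eq_single_of_mem j (Finset.mem_univ j) fun i _ hij => by
        rw [preimage_image_wedgeIncl_of_notMem hij hxU, hempty], preimage_image_wedgeIncl_self]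
  simpa only [Set.empty_union] using himage

variable {V : Fin 3 → Type*} {x : ∀ i, V i} {p q r : Fin 3} {c : ∀ i, Set (V i) → ℕ} {K : ℕ}
  {T : Set (V r)}

lemma image_wedgeIncl_union_image_wedgeIncl (hpq : p ≠ q) (hpr : p ≠ r) (hqr : q ≠ r) :
    wedgeIncl x p '' {x p}ᶜ ∪ wedgeIncl x q '' Set.univ = (wedgeIncl x r '' {x r}ᶜ)ᶜ := by
  ext w
  rw [Set.mem_union, Set.mem_compl_iff]
  cases w with
  | none => simp only [none_mem_image_wedgeIncl_iff, Set.mem_univ, Set.mem_compl_iff,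
      Set.mem_singleton_iff, not_true_eq_false, not_false_eq_true, or_true]
  | some s =>
    rw [some_mem_image_wedgeIncl_iff subset_rfl, some_mem_image_wedgeIncl_iff (Set.subset_univ _),
      some_mem_image_wedgeIncl_iff subset_rfl]
    omega

/-- A sweep of the first part without the root, then of the second part, then of the third. -/
lemma Sweep.wedge (hpq : p ≠ q) (hpr : p ≠ r) (hqr : q ≠ r) (hempty : ∀ i, c i ∅ = 0)
    (huniv : ∀ i, c i Set.univ = 0) (hcp : c p {x p}ᶜ ≤ 1) (hcr : c r {x r} ≤ 1)
    (hp : Sweep (fun S => c p S ≤ K) ∅ {x p}ᶜ)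
    (hq : Sweep (fun S => c q S + 1 ≤ K) ∅ Set.univ)
    (hr : Sweep (fun S => c r S ≤ K) {x r} T) :
    Sweep (fun U => ∑ i, c i (wedgeIncl x i ⁻¹' U) ≤ K) ∅ (wedgeIncl x r '' Tᶜ)ᶜ := by
  let P U := ∑ i, c i (wedgeIncl x i ⁻¹' U) ≤ K
  let Cp := wedgeIncl x p '' {x p}ᶜ
  have hCp : ∀ i ≠ p, wedgeIncl x i ⁻¹' Cp = ∅ := fun i hi =>
    preimage_image_wedgeIncl_of_notMem hi (by simp)
  have first : Sweep P ∅ Cp := by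
    simpa only [Set.image_empty] using hp.image_wedgeIncl hempty (x := x) (by simp)
  have second : Sweep P (Cp ∪ wedgeIncl x q '' ∅) (Cp ∪ wedgeIncl x q '' Set.univ) := by
    refine hq.union_image _ Cp fun S hS => ?_
    by_cases hxS : x q ∈ S
    · simp only [P, Set.preimage_union, sum_fin_three_of_ne hpq hpr hqr,
        preimage_image_wedgeIncl_self, hCp q hpq.symm, hCp r hpr.symm,
        preimage_image_wedgeIncl_of_mem hpq hxS, preimage_image_wedgeIncl_of_mem hqr.symm hxS]
      simp only [Cp, preimage_image_wedgeIncl_self, Set.empty_union, Set.compl_union_self, huniv]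
      omega
    · simp only [P, Set.preimage_union, sum_fin_three_of_ne hpq hpr hqr,
        preimage_image_wedgeIncl_self, hCp q hpq.symm, hCp r hpr.symm,
        preimage_image_wedgeIncl_of_notMem hpq hxS,
        preimage_image_wedgeIncl_of_notMem hqr.symm hxS]
      simp only [Cp, preimage_image_wedgeIncl_self, Set.empty_union, Set.union_empty, hempty]
      omega
  have third : Sweep P (wedgeIncl x r '' {x r}ᶜ)ᶜ (wedgeIncl x r '' Tᶜ)ᶜ := by
    have hcompl := (hr.compl.image_wedgeIncl (c := fun i S => c i Sᶜ) (x := x)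
      (fun i => Set.compl_empty ▸ huniv i) (by simp)).compl
    simpa only [Set.preimage_compl, compl_compl] using hcompl
  rw [Set.image_empty, Set.union_empty, image_wedgeIncl_union_image_wedgeIncl hpq hpr hqr] at second
  exact (first.trans second).trans third

end WedgeSweep

section Wedge

/-- The graph obtained from the disjoint union of the graphs `A i` by identifying all the vertices
`x i`. -/
noncomputable def wedge {ι : Type} [Finite ι] (A : ι → Multigraph) (x : ∀ i, (A i).V) :
    Multigraph where
  V := Option (Σ i, {v : (A i).V // v ≠ x i})
  E := Σ i, (A i).E
  finV := inferInstance
  finE := inferInstance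
  ends e := (wedgeIncl x e.1 ((A e.1).ends e.2).1, wedgeIncl x e.1 ((A e.1).ends e.2).2)
  loopless e h := (A e.1).loopless e.2 (wedgeIncl_injective (x := x) e.1 h)

/-- The inclusion of a part into a wedge. -/
noncomputable def wedgeEmbedding {ι : Type} [Finite ι] (A : ι → Multigraph) (x : ∀ i, (A i).V)
    (i : ι) : Embedding (A i) (wedge A x) where
  onV := wedgeIncl x i
  onE e := (⟨i, e⟩ : Σ i, (A i).E)
  onV_injective := wedgeIncl_injective i
  onE_injective _ _ h := sigma_mk_injective (β := fun i => (A i).E) h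
  ends_onE _ := rfl

variable {ι : Type} {A : ι → Multigraph} {x : ∀ i, (A i).V} {k : ℕ}

lemma exists_onE_wedgeEmbedding_eq [Finite ι] (e : (wedge A x).E) :
    ∃ i e₀, (wedgeEmbedding A x i).onE e₀ = e := ⟨e.1, e.2, rfl⟩

lemma card_wedge_edges [Fintype ι] : Nat.card (wedge A x).E = ∑ i, Nat.card (A i).E :=
  Nat.card_sigma

lemma ncard_eq_sum_ncard_preimage [Fintype ι] (B : Set (wedge A x).E) :
    B.ncard = ∑ i, ((wedgeEmbedding A x i).onE ⁻¹' B).ncard :=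
  calc B.ncard = Nat.card (Σ i, ((wedgeEmbedding A x i).onE ⁻¹' B)) :=
        Nat.card_congr ⟨fun e => ⟨e.1.1, e.1.2, e.2⟩, fun e => ⟨⟨e.1, e.2.1⟩, e.2.2⟩,
          fun _ => rfl, fun _ => rfl⟩
    _ = _ := Nat.card_sigma

lemma delta_wedge [Fintype ι] (S : Set (wedge A x).V) :
    (wedge A x).delta S = ∑ i, (A i).delta (wedgeIncl x i ⁻¹' S) :=
  ncard_eq_sum_ncard_preimage _

lemma degree_wedgeIncl_of_ne [Finite ι] {i : ι} {y : (A i).V} (hy : y ≠ x i) :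
    (wedge A x).degree (wedgeIncl x i y) = (A i).degree y := by
  have := Fintype.ofFinite ι
  have hself : wedgeIncl x i ⁻¹' {wedgeIncl x i y} = {y} := by
    rw [← Set.image_singleton, preimage_image_wedgeIncl_self]
  have hother : ∀ j ≠ i, wedgeIncl x j ⁻¹' {wedgeIncl x i y} = ∅ := fun j hj => by
    rw [← Set.image_singleton, preimage_image_wedgeIncl_of_notMem hj hy.symm]
  refine delta_singleton.symm.trans <| (delta_wedge _).trans <|
    (Finset.sum_eq_single_of_mem i (Finset.mem_univ i) fun j _ hj => ?_).trans ?_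
  · exact (congrArg (A j).delta (hother j hj)).trans delta_empty
  · exact (congrArg (A i).delta hself).trans delta_singleton

lemma wedge_eq_empty_or_univ [Finite ι] [Nonempty ι]
    (hA : ∀ i S, (A i).delta S = 0 → S = ∅ ∨ S = Set.univ) (S : Set (wedge A x).V)
    (hS : (wedge A x).delta S = 0) : S = ∅ ∨ S = Set.univ := by
  have := Fintype.ofFinite ι
  rw [delta_wedge, Finset.sum_eq_zero_iff] at hS
  have htriv i := hA i _ (hS i (Finset.mem_univ i))
  have hroot : ∀ i, x i ∈ wedgeIncl x i ⁻¹' S ↔ none ∈ S := fun i =>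
    iff_of_eq (congrArg (· ∈ S) wedgeIncl_base)
  by_cases h : none ∈ S
  · refine Or.inr (Set.eq_univ_iff_forall.mpr fun w => ?_)
    obtain ⟨i, v, rfl⟩ := exists_wedgeIncl_eq w
    rcases htriv i with hi | hi
    · exact absurd (hi ▸ (hroot i).mpr h) (Set.notMem_empty _)
    · exact Set.eq_univ_iff_forall.mp hi v
  · refine Or.inl (Set.eq_empty_iff_forall_notMem.mpr fun w hw => ?_)
    obtain ⟨i, v, rfl⟩ := exists_wedgeIncl_eq w
    rcases htriv i with hi | hi
    · exact Set.eq_empty_iff_forall_notMem.mp hi v hw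
    · exact h ((hroot i).mp (hi ▸ Set.mem_univ _))

/-- Where one part has a cut larger than `k`, all the other parts lie on the side of the common
vertex; but among three such cuts, two are on the same side of the common vertex. -/
lemma lt_cutwidth_wedge [Fintype ι] (hι : 2 < Fintype.card ι) (hA : ∀ i, k < (A i).cutwidth)
    (hconn : ∀ i S, (A i).delta S = 0 → S = ∅ ∨ S = Set.univ) : k + 1 < (wedge A x).cutwidth := by
  by_contra! hle
  obtain ⟨ρ, hρ, hwidth⟩ := cutwidth_le_iff_exists_ordering.mp hle
  let Z i n : Set (A i).V := wedgeIncl x i ⁻¹' {u | ρ u < n}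
  choose n hn using fun i =>
    exists_lt_delta_of_lt_cutwidth (hA i) (hρ.comp (wedgeIncl_injective (x := x) i))
  have htriv : ∀ i j, i ≠ j → Z j (n i) = ∅ ∨ Z j (n i) = Set.univ := fun i j hij => by
    have hsum : (A i).delta (Z i (n i)) + (A j).delta (Z j (n i)) ≤ k + 1 :=
      (Finset.add_le_sum (fun l _ => Nat.zero_le ((A l).delta (Z l (n i)))) (Finset.mem_univ i)
        (Finset.mem_univ j) hij).trans ((delta_wedge _).symm.trans_le (hwidth (n i)))
    have : k < (A i).delta (Z i (n i)) := hn i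
    exact hconn j _ (by omega)
  have hroot : ∀ i l, x i ∈ Z i l ↔ ρ none < l := fun i l => by
    rw [Set.mem_preimage, wedgeIncl_base, Set.mem_ofPred_eq]
  obtain ⟨i, j, hij, hside⟩ := Fintype.exists_ne_map_eq_of_card_lt (fun i => ρ none < n i)
    (by simpa only [Fintype.card_prop] using hι)
  wlog hle : n i ≤ n j generalizing i j
  · exact this j i hij.symm hside.symm (le_of_not_ge hle)
  have hmono : ∀ l, Z l (n i) ⊆ Z l (n j) := fun l u hu => lt_of_lt_of_le hu hle
  by_cases h : ρ none < n i
  · rcases htriv i j hij with hZ | hZ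
    · exact absurd (hZ ▸ (hroot j _).mpr h) (Set.notMem_empty _)
    · have : k < (A j).delta (Z j (n j)) := hn j
      rw [Set.eq_univ_of_univ_subset (hZ.symm.trans_subset (hmono j)), delta_univ] at this
      exact Nat.not_lt_zero k this
  · rcases htriv j i hij.symm with hZ | hZ
    · have : k < (A i).delta (Z i (n i)) := hn i
      rw [Set.eq_empty_of_subset_empty ((hmono i).trans_eq hZ), delta_empty] at this
      exact Nat.not_lt_zero k this
    · exact h (hside.mpr ((hroot i _).mp (hZ ▸ Set.mem_univ _)))

end Wedge

section Root

/-- A vertex `x` of `G` of degree one such that `G` can be swept at width `k + 1` with `x` coming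
last; obstructions of level `k` are glued at roots into obstructions of level `k + 1`. -/
structure IsRoot (k : ℕ) (G : Multigraph) (x : G.V) : Prop where
  degree_eq_one : G.degree x = 1
  sweep : Sweep (fun S => G.delta S ≤ k + 1) ∅ {x}ᶜ

namespace IsRoot

variable {k : ℕ} {G : Multigraph} {x : G.V} {f : G.E} {S : Set G.V}

lemma delta_singleton_eq_one (hx : IsRoot k G x) : G.delta {x} = 1 :=
  delta_singleton.trans hx.degree_eq_one

lemma delta_compl_singleton_eq_one (hx : IsRoot k G x) : G.delta {x}ᶜ = 1 :=
  delta_compl.trans hx.delta_singleton_eq_one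

lemma sweep_singleton_univ (hx : IsRoot k G x) :
    Sweep (fun S => G.delta S ≤ k + 1) {x} Set.univ := by
  simpa only [delta_compl, compl_compl, Set.compl_empty] using hx.sweep.compl

lemma sweep_univ (hx : IsRoot k G x) : Sweep (fun S => G.delta S ≤ k + 1) ∅ Set.univ := by
  have hinsert : insert x {x}ᶜ = Set.univ := Set.insert_eq _ _ ▸ Set.union_compl_self {x}
  rw [← hinsert]
  refine hx.sweep.insert_right ?_ ?_
  · rw [hx.delta_compl_singleton_eq_one]; exact Nat.le_add_left 1 k
  · rw [hinsert, delta_univ]; exact Nat.zero_le _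

lemma sweep_insert (hx : IsRoot k G x) :
    Sweep (fun S => G.delta (insert x S) ≤ k + 1) ∅ {x}ᶜ := by
  have hinter := hx.sweep_singleton_univ.between.inter {x}ᶜ
    (P' := fun S => G.delta (insert x S) ≤ k + 1) fun U ⟨hU, hxU, _⟩ => by
      have hins : insert x (U ∩ {x}ᶜ) = U := by
        rw [← Set.sdiff_eq, Set.insert_sdiff_singleton, Set.insert_eq_of_mem (hxU rfl)]
      rwa [hins]
  simpa only [Set.inter_compl_self, Set.univ_inter] using hinter

lemma eq_of_inc (hx : IsRoot k G x) {e : G.E} (he : G.Inc e x) (hf : G.Inc f x) : e = f :=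
  (Set.ncard_le_one (s := {e | G.Inc e x})).mp hx.degree_eq_one.le e he f hf

lemma delta_insert_of_notMem (hx : IsRoot k G x) (hf : G.Inc f x) (hxS : x ∉ S)
    (hfS : f ∉ G.boundary S) : G.delta (insert x S) = G.delta S + 1 :=
  hx.degree_eq_one ▸ delta_insert_of_forall_notMem hxS fun _ he => hx.eq_of_inc he hf ▸ hfS

end IsRoot

end Root

section WedgeReduction

lemma IsReduction.wedge_cases {ι : Type} [Finite ι] {A : ι → Multigraph} {x : ∀ i, (A i).V}
    {D : Set (wedge A x).E} (hD : (wedge A x).IsReduction D) :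
    (∃ i D₀, (A i).IsReduction D₀ ∧ D = (wedgeEmbedding A x i).onE '' D₀) ∨
      ∃ p q e f, p ≠ q ∧ (A p).Inc e (x p) ∧ (A q).Inc f (x q) ∧
        D = {(wedgeEmbedding A x p).onE e, (wedgeEmbedding A x q).onE f} := by
  obtain ⟨d, hd⟩ := hD.nonempty
  obtain ⟨p, e, rfl⟩ := exists_onE_wedgeEmbedding_eq d
  by_cases hp : D ⊆ Set.range (wedgeEmbedding A x p).onE
  · obtain ⟨D₀, rfl⟩ := Set.subset_range_iff_exists_image_eq.mp hp
    exact Or.inl ⟨p, D₀, (wedgeEmbedding A x p).isReduction_of_image hD, rfl⟩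
  · obtain ⟨d', hd', hd'p⟩ := Set.not_subset.mp hp
    obtain ⟨q, f, rfl⟩ := exists_onE_wedgeEmbedding_eq d'
    have hpq : p ≠ q := by rintro rfl; exact hd'p ⟨f, rfl⟩
    have hne : (wedgeEmbedding A x p).onE e ≠ (wedgeEmbedding A x q).onE f :=
      fun h => hd'p ⟨e, h⟩
    obtain ⟨w, hw⟩ := hD.exists_inc
    obtain ⟨u, rfl, hu⟩ := (wedgeEmbedding A x p).inc_onE_iff.mp (hw _ hd)
    obtain ⟨v, huv, hv⟩ := (wedgeEmbedding A x q).inc_onE_iff.mp (hw _ hd')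
    obtain ⟨rfl, rfl⟩ := (wedgeIncl_eq_iff_of_ne (x := x) hpq.symm).mp huv
    refine Or.inr ⟨p, q, e, f, hpq, hu, hv, (Set.eq_of_subset_of_ncard_le
      (Set.pair_subset hd hd') ?_).symm⟩
    exact hD.ncard_le_two.trans_eq (Set.ncard_pair hne).symm

lemma exists_fin_three_ne : ∀ q : Fin 3, ∃ p r, p ≠ q ∧ p ≠ r ∧ q ≠ r := by decide

lemma exists_fin_three_ne_ne : ∀ p q : Fin 3, ∃ r, p ≠ r ∧ q ≠ r := by decide

variable {A : Fin 3 → Multigraph} {x : ∀ i, (A i).V} {k : ℕ} {p q r : Fin 3}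

lemma sweep_reduced_wedge_image (hx : ∀ i, IsRoot k (A i) (x i)) (D : Set (A q).E)
    (hD : Sweep (fun S => ((A q).reducedBoundary D S).ncard ≤ k) ∅ Set.univ) :
    Sweep (fun S => ((wedge A x).reducedBoundary ((wedgeEmbedding A x q).onE '' D) S).ncard ≤ k + 1)
      ∅ Set.univ := by
  obtain ⟨p, r, hpq, hpr, hqr⟩ := exists_fin_three_ne q
  let c : ∀ i, Set (A i).V → ℕ :=
    Function.update (fun i => (A i).delta) q fun S => ((A q).reducedBoundary D S).ncard
  have hcq : c q = fun S => ((A q).reducedBoundary D S).ncard := Function.update_self ..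
  have hc : ∀ i ≠ q, c i = (A i).delta := fun i hi => Function.update_of_ne hi ..
  have hle : ∀ i S, c i S ≤ (A i).delta S := fun i S => by
    rcases eq_or_ne i q with rfl | hi
    · exact hcq ▸ ncard_reducedBoundary_le
    · exact (hc i hi ▸ le_refl _)
  have hsweep := Sweep.wedge (T := Set.univ) (K := k + 1) hpq hpr hqr (c := c) (x := x)
    (fun i => Nat.eq_zero_of_le_zero (delta_empty ▸ hle i ∅))
    (fun i => Nat.eq_zero_of_le_zero (delta_univ ▸ hle i Set.univ))
    ((hle p _).trans (hx p).delta_compl_singleton_eq_one.le)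
    ((hle r _).trans (hx r).delta_singleton_eq_one.le)
    ((hx p).sweep.mono fun S => (hle p S).trans)
    (hcq ▸ hD.mono fun S => Nat.succ_le_succ)
    ((hx r).sweep_singleton_univ.mono fun S => (hle r S).trans)
  simp only [Set.compl_univ, Set.image_empty, Set.compl_empty] at hsweep
  refine hsweep.mono fun S hS => le_trans ?_ hS
  rw [ncard_eq_sum_ncard_preimage]
  refine Finset.sum_le_sum fun i _ => ?_
  rcases eq_or_ne i q with rfl | hi
  · exact hcq ▸ Set.ncard_le_ncard fun e he =>
      (wedgeEmbedding A x i).onE_mem_reducedBoundary_iff.mp he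
  · exact hc i hi ▸ Set.ncard_le_ncard fun e he =>
      (wedgeEmbedding A x i).onE_mem_boundary_iff.mp (reducedBoundary_subset he)

end WedgeReduction

section WedgeLift

lemma preimage_wedgeIncl_union {V : Fin 3 → Type*} {x : ∀ i, V i} {p q r : Fin 3}
    (hpq : p ≠ q) (hpr : p ≠ r) (hqr : q ≠ r) {X : Set (V p)} {Y : Set (V q)} {Z : Set (V r)}
    (hX : x p ∉ X) (hY : x q ∉ Y) (hZ : x r ∉ Z) :
    wedgeIncl x p ⁻¹' (wedgeIncl x p '' X ∪ wedgeIncl x q '' Y ∪ wedgeIncl x r '' Z) = X ∧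
    wedgeIncl x q ⁻¹' (wedgeIncl x p '' X ∪ wedgeIncl x q '' Y ∪ wedgeIncl x r '' Z) = Y ∧
    wedgeIncl x r ⁻¹' (wedgeIncl x p '' X ∪ wedgeIncl x q '' Y ∪ wedgeIncl x r '' Z) = Z := by
  simp only [Set.preimage_union, preimage_image_wedgeIncl_self,
    preimage_image_wedgeIncl_of_notMem hpq hY, preimage_image_wedgeIncl_of_notMem hpr hZ,
    preimage_image_wedgeIncl_of_notMem hpq.symm hX, preimage_image_wedgeIncl_of_notMem hqr hZ,
    preimage_image_wedgeIncl_of_notMem hpr.symm hX, preimage_image_wedgeIncl_of_notMem hqr.symm hY,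
    Set.union_empty, Set.empty_union, and_self]

lemma insert_none_union_image_wedgeIncl {V : Fin 3 → Type*} {x : ∀ i, V i} {p q r : Fin 3}
    (hpq : p ≠ q) (hpr : p ≠ r) (hqr : q ≠ r) :
    insert none (wedgeIncl x p '' {x p}ᶜ ∪ wedgeIncl x q '' {x q}ᶜ ∪ wedgeIncl x r '' {x r}ᶜ) =
      Set.univ := by
  refine Set.eq_univ_iff_forall.mpr fun w => ?_
  cases w with
  | none => exact Set.mem_insert _ _
  | some s =>
    refine Or.inr ?_
    simp only [Set.mem_union, some_mem_image_wedgeIncl_iff subset_rfl]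
    omega

variable {A : Fin 3 → Multigraph} {x : ∀ i, (A i).V} {k : ℕ} {p q r : Fin 3}

lemma onE_wedgeEmbedding_ne (hpq : p ≠ q) {e : (A p).E} {f : (A q).E} :
    (wedgeEmbedding A x p).onE e ≠ (wedgeEmbedding A x q).onE f :=
  fun h => hpq (congrArg (fun d : Σ i, (A i).E => d.1) h)

lemma delta_wedge_union (hpq : p ≠ q) (hpr : p ≠ r) (hqr : q ≠ r) {X : Set (A p).V}
    {Y : Set (A q).V} {Z : Set (A r).V} (hX : x p ∉ X) (hY : x q ∉ Y) (hZ : x r ∉ Z) :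
    (wedge A x).delta (wedgeIncl x p '' X ∪ wedgeIncl x q '' Y ∪ wedgeIncl x r '' Z) =
      (A p).delta X + (A q).delta Y + (A r).delta Z := by
  obtain ⟨hp, hq, hr⟩ := preimage_wedgeIncl_union hpq hpr hqr hX hY hZ
  exact (delta_wedge _).trans <| (sum_fin_three_of_ne hpq hpr hqr _).trans <|
    congrArg₂ (· + ·) (congrArg₂ (· + ·) (congrArg (A p).delta hp) (congrArg (A q).delta hq))
      (congrArg (A r).delta hr)

lemma pair_subset_boundary_wedge_iff (hpq : p ≠ q) (hpr : p ≠ r) (hqr : q ≠ r)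
    {X : Set (A p).V} {Y : Set (A q).V} {Z : Set (A r).V} (hX : x p ∉ X) (hY : x q ∉ Y)
    (hZ : x r ∉ Z) {e : (A p).E} {f : (A q).E} :
    {(wedgeEmbedding A x p).onE e, (wedgeEmbedding A x q).onE f} ⊆
        (wedge A x).boundary (wedgeIncl x p '' X ∪ wedgeIncl x q '' Y ∪ wedgeIncl x r '' Z) ↔
      e ∈ (A p).boundary X ∧ f ∈ (A q).boundary Y := by
  obtain ⟨hp, hq, -⟩ := preimage_wedgeIncl_union hpq hpr hqr hX hY hZ
  refine Set.pair_subset_iff.trans (and_congr ?_ ?_)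
  · exact (wedgeEmbedding A x p).onE_mem_boundary_iff.trans
      (iff_of_eq (congrArg (e ∈ (A p).boundary ·) hp))
  · exact (wedgeEmbedding A x q).onE_mem_boundary_iff.trans
      (iff_of_eq (congrArg (f ∈ (A q).boundary ·) hq))

lemma ncard_reducedBoundary_pair_le (hx : ∀ i, IsRoot k (A i) (x i)) (hpq : p ≠ q) (hpr : p ≠ r)
    (hqr : q ≠ r) {e : (A p).E} {f : (A q).E} (he : (A p).Inc e (x p))
    {Y : Set (A q).V} {Z : Set (A r).V} (hY : x q ∉ Y) (hZ : x r ∉ Z)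
    (hYk : f ∈ (A q).boundary Y → (A q).delta Y + (A r).delta Z ≤ k + 2)
    (hYk' : f ∉ (A q).boundary Y → (A q).delta Y + (A r).delta Z ≤ k) :
    ((wedge A x).reducedBoundary {(wedgeEmbedding A x p).onE e, (wedgeEmbedding A x q).onE f}
      (wedgeIncl x p '' {x p}ᶜ ∪ wedgeIncl x q '' Y ∪ wedgeIncl x r '' Z)).ncard ≤ k + 1 := by
  have hX : x p ∉ ({x p}ᶜ : Set (A p).V) := by simp
  have heX : e ∈ (A p).boundary {x p}ᶜ := mem_boundary_compl_singleton.mpr he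
  have hdelta := delta_wedge_union hpq hpr hqr hX hY hZ
  rw [(hx p).delta_compl_singleton_eq_one] at hdelta
  by_cases hfY : f ∈ (A q).boundary Y
  · refine ncard_reducedBoundary_le_of_subset
      ((pair_subset_boundary_wedge_iff hpq hpr hqr hX hY hZ).mpr ⟨heX, hfY⟩) ?_
    rw [hdelta, Set.ncard_pair (onE_wedgeEmbedding_ne hpq)]
    have := hYk hfY
    omega
  · refine ncard_reducedBoundary_le.trans (hdelta.trans_le ?_)
    have := hYk' hfY
    omega

/-- The first two parts are swept up to their roots before the third one, so that both edges of
the pair are in the boundary while the third part is swept. -/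
lemma sweep_reduced_wedge_pair (hx : ∀ i, IsRoot k (A i) (x i)) (hpq : p ≠ q)
    {e : (A p).E} {f : (A q).E} (he : (A p).Inc e (x p)) (hf : (A q).Inc f (x q)) :
    Sweep (fun S => ((wedge A x).reducedBoundary
      {(wedgeEmbedding A x p).onE e, (wedgeEmbedding A x q).onE f} S).ncard ≤ k + 1)
      ∅ Set.univ := by
  obtain ⟨r, hpr, hqr⟩ := exists_fin_three_ne_ne p q
  let P (S : Set (Option (Σ i, {v : (A i).V // v ≠ x i}))) := ((wedge A x).reducedBoundary
    {(wedgeEmbedding A x p).onE e, (wedgeEmbedding A x q).onE f} S).ncard ≤ k + 1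
  let Cp := wedgeIncl x p '' {x p}ᶜ
  let Cq := wedgeIncl x q '' {x q}ᶜ
  have first : Sweep P ∅ Cp := by
    have h := (hx p).sweep.image_wedgeIncl (c := fun i => (A i).delta) (x := x)
      (fun i => delta_empty) (by simp)
    rw [Set.image_empty] at h
    exact h.mono fun S hS => ncard_reducedBoundary_le.trans ((delta_wedge S).trans_le hS)
  have second : Sweep P (Cp ∪ wedgeIncl x q '' ∅) (Cp ∪ Cq) :=
    (hx q).sweep_insert.between.union_image _ Cp fun Y ⟨hY, _, hYx⟩ => by
      have hxY : x q ∉ Y := fun h => hYx h rfl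
      have hdeg := delta_le_delta_insert_add_degree (S := Y) (x := x q)
      rw [(hx q).degree_eq_one] at hdeg
      have h : P (Cp ∪ wedgeIncl x q '' Y ∪ wedgeIncl x r '' ∅) := by
        refine ncard_reducedBoundary_pair_le hx hpq hpr hqr he hxY (Set.notMem_empty (x r))
          (fun _ => ?_) fun hfY => ?_
        · rw [delta_empty]; omega
        · rw [(hx q).delta_insert_of_notMem hf hxY hfY] at hY
          rw [delta_empty]; omega
      rwa [Set.image_empty, Set.union_empty] at h
  have hP : ∀ Z, x r ∉ Z → (A r).delta Z ≤ k + 1 → P (Cp ∪ Cq ∪ wedgeIncl x r '' Z) :=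
    fun Z hxZ hZ => by
      refine ncard_reducedBoundary_pair_le hx hpq hpr hqr he (by simp) hxZ (fun _ => ?_)
        fun h => absurd (mem_boundary_compl_singleton.mpr hf) h
      rw [(hx q).delta_compl_singleton_eq_one]; omega
  have third : Sweep P (Cp ∪ Cq ∪ wedgeIncl x r '' ∅) (Cp ∪ Cq ∪ wedgeIncl x r '' {x r}ᶜ) :=
    (hx r).sweep.between.union_image _ _ fun Z ⟨hZ, _, hZx⟩ => hP Z (fun h => hZx h rfl) hZ
  have hlast := hP {x r}ᶜ (by simp) ((hx r).delta_compl_singleton_eq_one.trans_le (by omega))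
  have huniv : insert none (Cp ∪ Cq ∪ wedgeIncl x r '' {x r}ᶜ) = Set.univ :=
    insert_none_union_image_wedgeIncl hpq hpr hqr
  rw [Set.image_empty, Set.union_empty] at second third
  have hPuniv : P Set.univ := ncard_reducedBoundary_le.trans (delta_univ.trans_le (Nat.zero_le _))
  exact huniv ▸ ((first.trans second).trans third).insert_right hlast (huniv.symm ▸ hPuniv)

theorem IsCutObstruction.wedge (hA : ∀ i, IsCutObstruction k (A i))
    (hx : ∀ i, IsRoot k (A i) (x i)) : IsCutObstruction (k + 1) (wedge A x) where
  lt_cutwidth := lt_cutwidth_wedge (by simp) (fun i => (hA i).lt_cutwidth)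
    fun i => (hA i).eq_empty_or_univ
  eq_empty_or_univ := wedge_eq_empty_or_univ fun i => (hA i).eq_empty_or_univ
  sweep_reduced D hD := by
    rcases hD.wedge_cases with ⟨q, D₀, hD₀, rfl⟩ | ⟨p, q, e, f, hpq, he, hf, rfl⟩
    · exact sweep_reduced_wedge_image hx D₀ ((hA q).sweep_reduced D₀ hD₀)
    · exact sweep_reduced_wedge_pair hx hpq he hf

theorem IsRoot.wedge (hx : ∀ i, IsRoot k (A i) (x i)) {y : (A r).V} (hy : IsRoot k (A r) y)
    (hxy : y ≠ x r) : IsRoot (k + 1) (wedge A x) (wedgeIncl x r y) where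
  degree_eq_one := (degree_wedgeIncl_of_ne hxy).trans hy.degree_eq_one
  sweep := by
    obtain ⟨p, q, hpq, hpr, hqr⟩ : ∃ p q, p ≠ q ∧ p ≠ r ∧ q ≠ r := by
      obtain ⟨p, q, hpr, hpq, hrq⟩ := exists_fin_three_ne r
      exact ⟨p, q, hpq, hpr, hrq.symm⟩
    have hr : Sweep (fun S => (A r).delta S ≤ k + 1 + 1) {x r} {y}ᶜ := by
      have h := hy.sweep.union_image id {x r} (Q := fun S => (A r).delta S ≤ k + 1 + 1)
        fun U hU => by
          rw [Set.image_id, Set.singleton_union]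
          exact delta_insert_le.trans ((hx r).degree_eq_one.symm ▸ Nat.succ_le_succ hU)
      rwa [Set.image_id, Set.image_id, Set.union_empty, Set.singleton_union,
        Set.insert_eq_of_mem (Set.mem_compl_singleton_iff.mpr hxy.symm)] at h
    have h := Sweep.wedge hpq hpr hqr (c := fun i => (A i).delta) (fun _ => delta_empty)
      (fun _ => delta_univ) (hx p).delta_compl_singleton_eq_one.le
      (hx r).delta_singleton_eq_one.le ((hx p).sweep.mono fun _ => Nat.le_succ_of_le)
      ((hx q).sweep_univ.mono fun _ => Nat.succ_le_succ) hr
    rw [compl_compl, Set.image_singleton] at h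
    exact h.mono fun U hU => (delta_wedge U).trans_le hU

end WedgeLift

/-! ### Stars -/

section Star

/-- The star with center `none` and leaves `some e`, `e : Fin n`. -/
def star (n : ℕ) : Multigraph where
  V := Option (Fin n)
  E := Fin n
  finV := inferInstance
  finE := inferInstance
  ends e := (none, some e)
  loopless _ := nofun

variable {n m : ℕ} {L : Set (Fin n)} {S U : Set (star n).V}

lemma boundary_star_subset_of_subset (hU : U ⊆ some '' L) : (star n).boundary U ⊆ L := by
  intro e he
  have hnone : none ∉ U := fun h => by obtain ⟨_, _, ⟨⟩⟩ := hU h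
  have hsome : some e ∈ U := by_contra fun h => he (iff_of_false hnone h)
  obtain ⟨_, hL, ⟨⟩⟩ := hU hsome
  exact hL

lemma boundary_star_subset_compl (hnone : none ∈ U) (hU : some '' L ⊆ U) :
    (star n).boundary U ⊆ Lᶜ :=
  fun e he hL => he (iff_of_true hnone (hU ⟨e, hL, rfl⟩))

lemma Sweep.star {P : Set (star n).V → Prop} {T : Set (star n).V}
    (hT : none ∈ T) (hLT : some '' L ⊆ T) (hP : ∀ U, (star n).boundary U ⊆ L → P U)
    (hP' : ∀ U, (star n).boundary U ⊆ Lᶜ → P U) : Sweep P ∅ T := by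
  have hleaves : Sweep P ∅ (some '' L) :=
    .of_forall_between (Set.empty_subset _) fun U _ hU => hP U (boundary_star_subset_of_subset hU)
  have hrest : Sweep P (insert none (some '' L)) T :=
    .of_forall_between (Set.insert_subset hT hLT) fun U hU _ =>
      hP' U (boundary_star_subset_compl (hU (Set.mem_insert _ _))
        ((Set.subset_insert _ _).trans hU))
  refine (hleaves.insert_right (hP _ ?_) (hP' _ ?_)).trans hrest
  · exact boundary_star_subset_of_subset subset_rfl
  · exact boundary_star_subset_compl (Set.mem_insert _ _) (Set.subset_insert _ _)

lemma star_eq_empty_or_univ (hS : (star n).delta S = 0) : S = ∅ ∨ S = Set.univ := by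
  have hmem : ∀ e : Fin n, none ∈ S ↔ some e ∈ S := fun e => by
    have := Set.eq_empty_iff_forall_notMem.mp ((Set.ncard_eq_zero).mp hS) e
    exact not_not.mp this
  by_cases h : none ∈ S
  · refine Or.inr (Set.eq_univ_iff_forall.mpr fun v => ?_)
    cases v with
    | none => exact h
    | some e => exact (hmem e).mp h
  · refine Or.inl (Set.eq_empty_iff_forall_notMem.mpr fun v hv => ?_)
    cases v with
    | none => exact h hv
    | some e => exact h ((hmem e).mpr hv)

/-- Every edge is in the boundary of the prefix ending just before the center or of the prefix
ending with it. -/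
lemma lt_cutwidth_star (h : 2 * m < n) : m < (star n).cutwidth := by
  by_contra! hle
  obtain ⟨ρ, hρ, hwidth⟩ := cutwidth_le_iff_exists_ordering.mp hle
  let B l := (star n).boundary {u | ρ u < l}
  have hcover : B (ρ none) ∪ B (ρ none + 1) = Set.univ := by
    refine Set.eq_univ_iff_forall.mpr fun e => ?_
    have hne : ρ (some e) ≠ ρ none := hρ.ne nofun
    rcases hne.lt_or_gt with hlt | hgt
    · exact Or.inl fun h => lt_irrefl (ρ none) (h.mpr hlt)
    · exact Or.inr fun h => (Nat.lt_succ_iff.mp (h.mp (Nat.lt_succ_self _))).not_gt hgt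
  have hcard : n ≤ (B (ρ none)).ncard + (B (ρ none + 1)).ncard := by
    refine le_trans ?_ (Set.ncard_union_le _ _)
    rw [hcover, Set.ncard_univ]
    exact (Nat.card_fin n).ge
  have h₁ : (B (ρ none)).ncard ≤ m := hwidth _
  have h₂ : (B (ρ none + 1)).ncard ≤ m := hwidth _
  omega

lemma exists_ncard_eq_of_ncard_lt {D : Set (star (2 * m + 1)).E} (h : D.ncard < m + 2) :
    ∃ L : Set (star (2 * m + 1)).E, L ⊆ Dᶜ ∧ L.ncard = m ∧ Lᶜ.ncard = m + 1 := by
  have hcard : Nat.card (star (2 * m + 1)).E = 2 * m + 1 := Nat.card_fin _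
  have hD := Set.ncard_add_ncard_compl D
  obtain ⟨L, hLD, hL⟩ : ∃ L ⊆ Dᶜ, L.ncard = m := Set.exists_subset_card_eq (by omega)
  have hcompl := Set.ncard_add_ncard_compl L
  exact ⟨L, hLD, hL, by omega⟩

theorem isCutObstruction_star (hm : 1 ≤ m) : IsCutObstruction m (star (2 * m + 1)) where
  lt_cutwidth := lt_cutwidth_star (Nat.lt_succ_self _)
  eq_empty_or_univ _ := star_eq_empty_or_univ
  sweep_reduced D hD := by
    obtain ⟨L, hLD, hL, hLc⟩ :=
      exists_ncard_eq_of_ncard_lt (m := m) (hD.ncard_le_two.trans_lt (by omega))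
    refine Sweep.star (L := L) trivial (Set.subset_univ _) (fun U hU => ?_) fun U hU => ?_
    · exact ncard_reducedBoundary_le.trans ((Set.ncard_le_ncard hU).trans_eq hL)
    · have hlt := ncard_reducedBoundary_lt hD.nonempty (Set.subset_compl_comm.mp hLD) hU
      exact Nat.lt_succ_iff.mp (hlt.trans_eq hLc)

lemma isRoot_star (e : Fin (2 * m + 1)) : IsRoot m (star (2 * m + 1)) (some e) where
  degree_eq_one := by
    have hinc : {f | (star (2 * m + 1)).Inc f (some e)} = {e} :=
      Set.ext fun _ => ⟨fun h => h.elim nofun Option.some.inj, fun h => Or.inr (congrArg some h)⟩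
    exact (congrArg Set.ncard hinc).trans (Set.ncard_singleton e)
  sweep := by
    obtain ⟨L, hLe, hL, hLc⟩ := exists_ncard_eq_of_ncard_lt (m := m) (D := {e})
      ((Set.ncard_singleton e).trans_lt (by omega))
    refine Sweep.star (L := L) nofun ?_ (fun U hU => ?_) fun U hU => ?_
    · rintro _ ⟨f, hf, rfl⟩ h
      exact hLe hf (Option.some.inj h)
    · exact ((Set.ncard_le_ncard hU).trans_eq hL).trans (Nat.le_succ m)
    · exact (Set.ncard_le_ncard hU).trans_eq hLc

end Star

/-! ### Counting obstructions -/

section Birooted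

/-- A level-`k` obstruction with two distinct roots: one to be glued on, and one that survives the
gluing. -/
structure IsBirooted (k : ℕ) (G : Multigraph) (x y : G.V) : Prop where
  isCutObstruction : IsCutObstruction k G
  isRoot_left : IsRoot k G x
  isRoot_right : IsRoot k G y
  ne : x ≠ y

variable {k m : ℕ}

lemma isBirooted_star (hm : 1 ≤ m) {e f : Fin (2 * m + 1)} (hef : e ≠ f) :
    IsBirooted m (star (2 * m + 1)) (some e) (some f) where
  isCutObstruction := isCutObstruction_star hm
  isRoot_left := isRoot_star e
  isRoot_right := isRoot_star f
  ne h := hef (Option.some.inj h)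

lemma IsBirooted.wedge {A : Fin 3 → Multigraph} {x y : ∀ i, (A i).V}
    (h : ∀ i, IsBirooted k (A i) (x i) (y i)) {i j : Fin 3} (hij : i ≠ j) :
    IsBirooted (k + 1) (wedge A x) (wedgeIncl x i (y i)) (wedgeIncl x j (y j)) where
  isCutObstruction := IsCutObstruction.wedge (fun i => (h i).isCutObstruction)
    fun i => (h i).isRoot_left
  isRoot_left := IsRoot.wedge (fun i => (h i).isRoot_left) (h i).isRoot_right (h i).ne.symm
  isRoot_right := IsRoot.wedge (fun i => (h i).isRoot_left) (h j).isRoot_right (h j).ne.symm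
  ne heq := (h i).ne ((wedgeIncl_eq_iff_of_ne hij).mp heq).1.symm

/-- There is a level-`k` obstruction with `n` edges and two distinct roots. -/
def ExistsBirooted (k n : ℕ) : Prop :=
  ∃ (G : Multigraph) (x y : G.V), IsBirooted k G x y ∧ Nat.card G.E = n

lemma existsBirooted_star (hm : 1 ≤ m) : ExistsBirooted m (2 * m + 1) :=
  ⟨star (2 * m + 1), some 0, some (Fin.last _), isBirooted_star hm (by simp [Fin.ext_iff]; omega),
    Nat.card_fin _⟩

lemma ExistsBirooted.wedge {n₀ n₁ n₂ : ℕ} (h₀ : ExistsBirooted k n₀) (h₁ : ExistsBirooted k n₁)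
    (h₂ : ExistsBirooted k n₂) : ExistsBirooted (k + 1) (n₀ + n₁ + n₂) := by
  obtain ⟨A, x, y, h, hcard⟩ : ∃ (A : Fin 3 → Multigraph) (x y : ∀ i, (A i).V),
      (∀ i, IsBirooted k (A i) (x i) (y i)) ∧ ∀ i, Nat.card (A i).E = ![n₀, n₁, n₂] i := by
    have h : ∀ i, ExistsBirooted k (![n₀, n₁, n₂] i) := by
      simpa only [Fin.forall_fin_succ] using ⟨h₀, h₁, h₂, nofun⟩
    choose A x y hA using h
    exact ⟨A, x, y, fun i => (hA i).1, fun i => (hA i).2⟩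
  refine ⟨Multigraph.wedge A x, _, _, IsBirooted.wedge h (zero_ne_one : (0 : Fin 3) ≠ 1), ?_⟩
  rw [card_wedge_edges, Fin.sum_univ_three, hcard, hcard, hcard]
  rfl

lemma exists_add_add_eq_of_add_eq_mul_three {a b N : ℕ} (h : a + b = N * 3) :
    ∃ a₀ a₁ a₂ b₀ b₁ b₂, a₀ + b₀ = N ∧ a₁ + b₁ = N ∧ a₂ + b₂ = N ∧
      a = a₀ + a₁ + a₂ ∧ b = b₀ + b₁ + b₂ := by
  refine ⟨min a N, min (a - N) N, a - N - N, N - min a N, N - min (a - N) N,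
    N - (a - N - N), ?_⟩
  omega

/-- The two seeds are the wedge of three stars with three edges, and the star with five edges: both
are level-`2` obstructions, with nine and five edges. -/
lemma existsBirooted_of_add_eq_three_pow {j : ℕ} :
    ∀ {a b : ℕ}, a + b = 3 ^ j → ExistsBirooted (2 + j) (9 * a + 5 * b) := by
  induction j with
  | zero =>
    intro a b hab
    have hseed : (a = 1 ∧ b = 0) ∨ (a = 0 ∧ b = 1) := by rw [pow_zero] at hab; omega
    rcases hseed with ⟨rfl, rfl⟩ | ⟨rfl, rfl⟩
    · have hstar : ExistsBirooted 1 3 := existsBirooted_star le_rfl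
      exact hstar.wedge hstar hstar
    · exact existsBirooted_star one_le_two
  | succ j ih =>
    intro a b hab
    obtain ⟨a₀, a₁, a₂, b₀, b₁, b₂, h₀, h₁, h₂, rfl, rfl⟩ :=
      exists_add_add_eq_of_add_eq_mul_three (hab.trans (pow_succ 3 j))
    have h := (ih h₀).wedge (ih h₁) (ih h₂)
    rwa [show 9 * a₀ + 5 * b₀ + (9 * a₁ + 5 * b₁) + (9 * a₂ + 5 * b₂) =
      9 * (a₀ + a₁ + a₂) + 5 * (b₀ + b₁ + b₂) by ring] at h

end Birooted

section Counting

variable {k : ℕ}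

lemma exists_map_univ_eq {α : Type*} {m : ℕ} {s : Multiset α} (hs : s.card = m) :
    ∃ a : Fin m → α, (Finset.univ : Finset (Fin m)).val.map a = s := by
  obtain ⟨l, rfl⟩ := Quotient.exists_rep s
  obtain rfl : l.length = m := hs
  exact ⟨l.get, (Fin.univ_val_map l.get).trans (congrArg _ (List.ofFn_get l))⟩

lemma map_univ_eq_of_isomorphic_sigmaUnion {α : Type*} {m : ℕ} {T : α → Multigraph}
    (hT : ∀ i, IsCutObstruction k (T i))
    (hcard : Function.Injective fun i => Nat.card (T i).E) {a b : Fin m → α}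
    (h : (sigmaUnion fun r => T (a r)).Isomorphic (sigmaUnion fun r => T (b r))) :
    (Finset.univ : Finset (Fin m)).val.map a = (Finset.univ : Finset (Fin m)).val.map b := by
  have hne (i) : Nonempty (T i).V := (hT i).nonempty_edges.map fun e => ((T i).ends e).1
  obtain ⟨π, hπ⟩ := exists_perm_of_isomorphic_sigmaUnion
    (fun i => (hT (a i)).eq_empty_or_univ) h
  have hab : a = b ∘ π := funext fun r => hcard (hπ r)
  rw [hab, ← Multiset.map_map]
  exact congrArg (Multiset.map b) (congrArg Finset.val (Finset.map_univ_equiv π))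

/-- Distinct multisets of components give non-isomorphic disjoint unions, as the edge counts of the
components are isomorphism invariants of the union. -/
theorem exists_pairwise_not_isomorphic_obstructions {n : ℕ} {T : Fin n → Multigraph}
    (hT : ∀ i, IsCutObstruction k (T i))
    (hcard : Function.Injective fun i => Nat.card (T i).E) (w : ℕ) :
    ∃ Gs : Fin (n.multichoose (w + 1)) → Multigraph,
      (∀ i, Gs i ∈ obstructions Immersion (dcwClass w k)) ∧
      ∀ i j, i ≠ j → ¬ Isomorphic (Gs i) (Gs j) := by
  choose a ha using fun s : Sym (Fin n) (w + 1) => exists_map_univ_eq s.2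
  have hsym : Fintype.card (Sym (Fin n) (w + 1)) = n.multichoose (w + 1) := by
    rw [Sym.card_sym_eq_multichoose, Fintype.card_fin]
  let q := (Fintype.equivFinOfCardEq hsym).symm
  refine ⟨fun i => sigmaUnion fun r => T (a (q i) r),
    fun i => sigmaUnion_mem_obstructions fun r => hT (a (q i) r), fun i j hij hiso => hij ?_⟩
  have h := map_univ_eq_of_isomorphic_sigmaUnion hT hcard hiso
  rw [ha, ha] at h
  exact q.injective (Subtype.ext h)

end Counting

end Multigraph

open Multigraph in
theorem dcw_obstruction_count_lower_bound_general (k w : ℕ) (hk : 2 ≤ k) :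
    ∃ Gs : Fin (Nat.choose (3 ^ (k - 2) + w + 1) (w + 1)) → Multigraph,
      (∀ i, Gs i ∈ obstructions Immersion (dcwClass w k)) ∧
      ∀ i j, i ≠ j → ¬ Isomorphic (Gs i) (Gs j) := by
  obtain ⟨j, rfl⟩ := Nat.exists_eq_add_of_le hk
  rw [Nat.add_sub_cancel_left]
  have hT (i : Fin (3 ^ j + 1)) : ExistsBirooted (2 + j) (9 * i + 5 * (3 ^ j - i)) :=
    existsBirooted_of_add_eq_three_pow (Nat.add_sub_cancel' (Nat.lt_succ_iff.mp i.isLt))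
  choose T x y hT hcard using hT
  have hinj : Function.Injective fun i => Nat.card (T i).E := fun i i' h => by
    simp only [hcard] at h
    exact Fin.ext (by omega)
  have hchoose : (3 ^ j + 1).multichoose (w + 1) = (3 ^ j + w + 1).choose (w + 1) := by
    rw [Nat.multichoose_eq, Nat.add_right_comm, Nat.add_sub_cancel]
    rfl
  rw [← hchoose]
  exact exists_pairwise_not_isomorphic_obstructions (fun i => (hT i).isCutObstruction) hinj w

open Multigraph in
/-- for `k ≥ 7`, `obs_{≤i}(C_{w,k})` contains at least
`binom(3^(k−7)+w+1, w+1)` pairwise non-isomorphic graphs. -/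
theorem dcw_obstruction_count_lower_bound (k w : ℕ) (hk : 7 ≤ k) :
    ∃ Gs : Fin (Nat.choose (3 ^ (k - 7) + w + 1) (w + 1)) → Multigraph,
      (∀ i, Gs i ∈ obstructions Immersion (dcwClass w k)) ∧
      ∀ i j, i ≠ j → ¬ Isomorphic (Gs i) (Gs j) := by
  have hpow : 3 ^ (k - 7) ≤ 3 ^ (k - 2) := Nat.pow_le_pow_right three_pos (by omega)
  have hchoose := Nat.choose_le_choose (w + 1) (Nat.add_le_add_right hpow (w + 1))
  obtain ⟨Gs, hmem, hiso⟩ := dcw_obstruction_count_lower_bound_general k w (by omega)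
  exact ⟨Gs ∘ Fin.castLE hchoose, fun i => hmem _,
    fun i j hij => hiso _ _ ((Fin.castLE_injective hchoose).ne hij)⟩
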